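/- arXiv:1701.00988 — 12 statements merged into one kernel-verified Lean document; each statement's English description precedes it below -/
import Mathlib

section
/- Let s1 > s2 > s3 ≥ 2 be pairwise coprime positive integers, let S be the numerical semigroup generated by n1 = s2*s3, n2 = s1*s3, n3 = s1*s2, and set δ1 = s1 − s2, δ2 = s2 − s3. Then Δ(S) = Euc(δ1,δ2) \ {0}. -/
/-- Membership in the numerical semigroup generated by `n1, n2, n3`. -/
def memS (n1 n2 n3 s : ℕ) : Prop :=
  ∃ a1 a2 a3 : ℕ, a1 * n1 + a2 * n2 + a3 * n3 = s

/-- The set of factorizations of `s` with respect to the generators `n1, n2, n3`. -/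
def Zset (n1 n2 n3 s : ℕ) : Set (ℕ × ℕ × ℕ) :=
  {z | z.1 * n1 + z.2.1 * n2 + z.2.2 * n3 = s}

/-- Length of a factorization. -/
def len (z : ℕ × ℕ × ℕ) : ℕ := z.1 + z.2.1 + z.2.2

/-- The set of lengths of factorizations of `s`. -/
def Lset (n1 n2 n3 s : ℕ) : Set ℕ := len '' Zset n1 n2 n3 s

/-- The Delta set of an element `s`: differences of consecutive lengths. -/
def DeltaOf (n1 n2 n3 s : ℕ) : Set ℕ :=
  {d | ∃ l l' : ℕ, l ∈ Lset n1 n2 n3 s ∧ l' ∈ Lset n1 n2 n3 s ∧ l' < l ∧ d = l - l' ∧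
      ∀ t ∈ Lset n1 n2 n3 s, ¬ (l' < t ∧ t < l)}

/-- The Delta set of the numerical semigroup generated by `n1, n2, n3`. -/
def DeltaS (n1 n2 n3 : ℕ) : Set ℕ :=
  {d | ∃ s : ℕ, memS n1 n2 n3 s ∧ d ∈ DeltaOf n1 n2 n3 s}


/-- The sequence of remainders of the (slow) Euclidean algorithm:
`etaSeq a b 0 = a`, `etaSeq a b 1 = b`, `etaSeq a b (n+2) = etaSeq a b n % etaSeq a b (n+1)`.
(0-indexed: `etaSeq a b (j-1)` is the paper's `η_j` for `a = η₁`, `b = η₂`.) -/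
def etaSeq (a b : ℕ) : ℕ → ℕ
  | 0 => a
  | 1 => b
  | n + 2 => etaSeq a b n % etaSeq a b (n + 1)

/-- `Dset u v lo = {u - q*v : lo ≤ q ≤ ⌊u/v⌋}`. -/
def Dset (u v lo : ℕ) : Set ℕ :=
  {x | ∃ q : ℕ, lo ≤ q ∧ q ≤ u / v ∧ x = u - q * v}

/-- Euclid's set of `δ1` and `δ2`: the union of the sets `D(η_j, η_{j+1})` over all `j`
with `η_{j+1} > 0`, where `q` starts from `0` for the first two levels and from `1`
afterwards. -/
def Euc (δ1 δ2 : ℕ) : Set ℕ :=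
  {x | ∃ j : ℕ, 0 < etaSeq (max δ1 δ2) (min δ1 δ2) (j + 1) ∧
      x ∈ Dset (etaSeq (max δ1 δ2) (min δ1 δ2) j)
            (etaSeq (max δ1 δ2) (min δ1 δ2) (j + 1)) (if j ≤ 1 then 0 else 1)}

/-- Values seen in the subtractive Euclidean algorithm. -/
inductive EE : ℕ → ℕ → ℕ → Prop
  | left (a b : ℕ) : EE a b a
  | right (a b : ℕ) : EE a b b
  | subl (a b d : ℕ) : b ≤ a → 0 < b → EE (a - b) b d → EE a b d
  | subr (a b d : ℕ) : a ≤ b → 0 < a → EE a (b - a) d → EE a b d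

theorem EE.swap {a b d : ℕ} (h : EE a b d) : EE b a d := by
  induction h with
  | left a b => exact EE.right _ _
  | right a b => exact EE.left _ _
  | subl a b d h1 h2 _ ih => exact EE.subr _ _ _ h1 h2 ih
  | subr a b d h1 h2 _ ih => exact EE.subl _ _ _ h1 h2 ih

theorem EE.many (q : ℕ) : ∀ (u v d : ℕ), 0 < v → q * v ≤ u → EE (u - q * v) v d → EE u v d := by
  induction q with
  | zero => intro u v d _ _ h; simpa using h
  | succ q ih =>
    intro u v d hv hq h
    have e : (q + 1) * v = q * v + v := by ring
    rw [e] at hq h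
    refine EE.subl _ _ _ (by omega) hv (ih _ _ _ hv (by omega) ?_)
    rwa [Nat.sub_sub, Nat.add_comm v]

theorem eta_shift (u v : ℕ) : ∀ j, etaSeq u v (j + 1) = etaSeq v (u % v) j := by
  intro j
  induction j using Nat.strong_induction_on with
  | _ j ih =>
    match j with
    | 0 => simp [etaSeq]
    | 1 => simp [etaSeq]
    | n + 2 =>
      have h1 := ih n (by omega)
      have h2 := ih (n + 1) (by omega)
      show etaSeq u v (n + 1) % etaSeq u v (n + 1 + 1) = etaSeq v (u % v) n % etaSeq v (u % v) (n + 1)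
      rw [h1, h2]

def HH (u v x : ℕ) : Prop :=
  ∃ j, 0 < etaSeq u v (j + 1) ∧ x ∈ Dset (etaSeq u v j) (etaSeq u v (j + 1)) 1

theorem HH.head {u v x : ℕ} (q : ℕ) (hv : 0 < v) (h1 : 1 ≤ q) (h2 : q * v ≤ u)
    (hx : x = u - q * v) : HH u v x :=
  ⟨0, hv, q, h1, (Nat.le_div_iff_mul_le hv).2 h2, hx⟩

theorem HH.tail {u v x : ℕ} (h : HH v (u % v) x) : HH u v x := by
  obtain ⟨j, h1, h2⟩ := h
  refine ⟨j + 1, ?_, ?_⟩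
  · rw [eta_shift]; exact h1
  · rw [eta_shift, eta_shift]; exact h2

theorem HH.toEE {u v x : ℕ} (h : HH u v x) : EE u v x := by
  obtain ⟨j, h1, h2⟩ := h
  induction j generalizing u v with
  | zero =>
    obtain ⟨q, hq1, hq2, hx⟩ := h2
    simp only [etaSeq] at h1 hq2 hx
    have := (Nat.le_div_iff_mul_le h1).1 hq2
    refine EE.many q _ _ _ h1 this ?_
    rw [← hx]; exact EE.left _ _
  | succ j ih =>
    rw [eta_shift] at h1
    rw [eta_shift, eta_shift] at h2
    have := (ih h1 h2).swap
    rcases Nat.eq_zero_or_pos v with hv | hv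
    · subst hv; simpa using this
    · refine EE.many (u / v) _ _ _ hv (Nat.div_mul_le_self u v) ?_
      have e : u - u / v * v = u % v := by
        have := Nat.mod_add_div' u v
        omega
      rwa [e]

theorem EE.zero {v d : ℕ} (h : EE v 0 d) : d = v ∨ d = 0 := by
  cases h with
  | left => simp
  | right => simp
  | subl _ _ _ _ h _ => omega
  | subr _ _ _ h1 h2 _ => omega

theorem HH.sub {u v x : ℕ} (hv : 0 < v) (h : v ≤ u) (H : HH (u - v) v x) : HH u v x := by
  obtain ⟨j, h1, h2⟩ := H
  cases j with
  | zero =>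
    obtain ⟨q, hq1, hq2, hx⟩ := h2
    simp only [etaSeq] at h1 hq2 hx
    have := (Nat.le_div_iff_mul_le h1).1 hq2
    have e : (q + 1) * v = q * v + v := by ring
    exact HH.head (q + 1) hv (by omega) (by omega) (by omega)
  | succ j =>
    rw [eta_shift] at h1
    rw [eta_shift, eta_shift] at h2
    apply HH.tail
    have e : (u - v) % v = u % v := (Nat.mod_eq_sub_mod h).symm
    rw [e] at h1 h2
    exact ⟨j, h1, h2⟩

theorem sub_aux {u v x : ℕ} (hv : 0 < v) (hvu : v ≤ u)
    (i1 : v ≤ u - v → x = u - v ∨ x = v ∨ HH (u - v) v x)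
    (i2 : u - v ≤ v → x = u - v ∨ x = v ∨ HH v (u - v) x) :
    x = u ∨ x = v ∨ HH u v x := by
  rcases le_or_gt v (u - v) with h | h
  · rcases i1 h with h | h | h
    · exact Or.inr (Or.inr (HH.head 1 hv le_rfl (by omega) (by omega)))
    · exact Or.inr (Or.inl h)
    · exact Or.inr (Or.inr (h.sub hv hvu))
  · rcases i2 h.le with h' | h' | h'
    · exact Or.inr (Or.inr (HH.head 1 hv le_rfl (by omega) (by omega)))
    · exact Or.inr (Or.inl h')
    · refine Or.inr (Or.inr (HH.tail ?_))
      rwa [Nat.mod_eq_sub_mod hvu, Nat.mod_eq_of_lt h]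

theorem EE.toHH {u v x : ℕ} (h : EE u v x) :
    (v ≤ u → x = u ∨ x = v ∨ HH u v x) ∧ (u ≤ v → x = u ∨ x = v ∨ HH v u x) := by
  induction h with
  | left a b => simp
  | right a b => simp
  | subl a b d h1 h2 _ ih =>
    have := sub_aux h2 h1 ih.1 ih.2
    refine ⟨fun _ => this, fun h => ?_⟩
    have : a = b := by omega
    subst this; assumption
  | subr a b d h1 h2 _ ih =>
    have := sub_aux (x := d) h2 h1 (fun h => by have := ih.2 h; tauto)
      (fun h => by have := ih.1 h; tauto)
    refine ⟨fun h => ?_, fun _ => by tauto⟩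
    have : a = b := by omega
    subst this; assumption

theorem mem_Euc_iff {a b x : ℕ} (ha : 0 < a) (hb : 0 < b) : x ∈ Euc a b ↔ EE a b x := by
  have hm : 0 < min a b := by omega
  have key : x ∈ Euc a b ↔ x = max a b ∨ x = min a b ∨ HH (max a b) (min a b) x := by
    set u := max a b with hu
    set v := min a b with hv
    have huv : v ≤ u := by omega
    constructor
    · rintro ⟨j, h1, q, h2, h3, h4⟩
      by_cases hq : 1 ≤ q
      · exact Or.inr (Or.inr ⟨j, h1, q, hq, h3, h4⟩)
      · have hq0 : q = 0 := by omega
        subst hq0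
        match j with
        | 0 => left; simpa [etaSeq] using h4
        | 1 => right; left; simpa [etaSeq] using h4
        | n + 2 => simp at h2
    · rintro (h | h | ⟨j, h1, q, h2, h3, h4⟩)
      · exact ⟨0, hm, 0, by simp, by simp, by simp [etaSeq]; exact h⟩
      · by_cases hz : u % v = 0
        · have h1 : 1 ≤ u / v := (Nat.one_le_div_iff hm).2 huv
          refine ⟨0, hm, u / v - 1, by simp, Nat.sub_le _ _, ?_⟩
          simp only [etaSeq]
          have := Nat.mod_add_div' u v
          rw [hz, zero_add] at this
          rw [Nat.sub_mul, this, h]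
          omega
        · refine ⟨1, Nat.pos_of_ne_zero hz, 0, by simp, by simp, ?_⟩
          simpa [etaSeq] using h
      · exact ⟨j, h1, q, by split_ifs <;> omega, h3, h4⟩
  rw [key]
  rcases le_total b a with h | h
  · rw [max_eq_left h, min_eq_right h]
    constructor
    · rintro (rfl | rfl | h)
      · exact EE.left _ _
      · exact EE.right _ _
      · exact h.toEE
    · intro h'; exact h'.toHH.1 h
  · rw [max_eq_right h, min_eq_left h]
    constructor
    · rintro (rfl | rfl | h)
      · exact EE.right _ _
      · exact EE.left _ _
      · exact h.toEE.swap
    · intro h'; have := h'.toHH.2 h; tauto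

theorem key_arith (k : ℕ) : ∀ (α β m n d : ℕ), α + β ≤ k → 0 < d → (d : ℤ) = m * α - n * β →
    (∀ m' n' : ℕ, m' ≤ m → n' ≤ n → ¬ (0 < (m' * α - n' * β : ℤ) ∧ (m' * α - n' * β : ℤ) < d)) →
    EE α β d := by
  induction k with
  | zero =>
    intro α β m n d hk hd he _
    have h1 : α = 0 := by omega
    have h2 : β = 0 := by omega
    subst h1 h2
    simp at he; omega
  | succ k ih =>
    intro α β m n d hk hd he H
    have hd' : (0 : ℤ) < d := by exact_mod_cast hd
    rcases Nat.eq_zero_or_pos α with ha | ha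
    · subst ha
      have : (0 : ℤ) ≤ n * β := by positivity
      simp at he; omega
    have hm1 : 1 ≤ m := by
      by_contra hm
      have hm : m = 0 := by omega
      subst hm
      have : (0 : ℤ) ≤ n * β := by positivity
      simp at he; omega
    have H1 : (d : ℤ) ≤ α := by
      have := H 1 0 hm1 (by omega)
      simp at this
      exact_mod_cast this ha
    have ha' : (0 : ℤ) < α := by exact_mod_cast ha
    rcases Nat.eq_zero_or_pos β with hb | hb
    · subst hb
      have hm1' : (1 : ℤ) ≤ m := by exact_mod_cast hm1
      have : (α : ℤ) ≤ d := by rw [he]; push_cast; nlinarith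
      have : d = α := by omega
      rw [this]; exact EE.left _ _
    rcases le_total β α with h | h
    · have h' : (β : ℤ) ≤ α := by exact_mod_cast h
      rcases le_or_gt m n with hmn | hmn
      · refine EE.subl _ _ _ h hb (ih (α - β) β m (n - m) d (by omega) hd ?_ ?_)
        · rw [he]; push_cast [h, hmn]; ring
        · intro m' k' h1 h2
          have := H m' (m' + k') h1 (by omega)
          have e : (m' * ((α - β : ℕ) : ℤ) - k' * β : ℤ) = m' * α - ((m' + k' : ℕ) : ℤ) * β := by
            push_cast [h]; ring
          rw [e]; exact this
      · have hmn' : (n : ℤ) + 1 ≤ m := by exact_mod_cast hmn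
        have hn : (0 : ℤ) ≤ n := by positivity
        have : (α : ℤ) ≤ d := by
          rw [he]
          nlinarith [mul_le_mul_of_nonneg_right hmn' ha'.le, mul_nonneg hn (sub_nonneg.2 h')]
        have : d = α := by omega
        rw [this]; exact EE.left _ _
    · have h' : (α : ℤ) ≤ β := by exact_mod_cast h
      have hn : (0 : ℤ) ≤ n := by positivity
      have hmn : n ≤ m := by
        by_contra hc
        have hc' : (m : ℤ) ≤ n := by omega
        nlinarith [mul_le_mul_of_nonneg_right hc' ha'.le, mul_nonneg hn (sub_nonneg.2 h')]
      refine EE.subr _ _ _ h ha (ih α (β - α) (m - n) n d (by omega) hd ?_ ?_)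
      · rw [he]; push_cast [h, hmn]; ring
      · intro m' n' h1 h2
        have := H (m' + n') n' (by omega) h2
        have e : (m' * α - n' * ((β - α : ℕ) : ℤ) : ℤ) = ((m' + n' : ℕ) : ℤ) * α - n' * β := by
          push_cast [h]; ring
        rw [e]; exact this

/-- `d` is a gap of the set of values of `a x - b y` on a triangle. -/
def TT (a b d : ℕ) : Prop :=
  ∃ N x y x' y' : ℕ, x + y ≤ N ∧ x' + y' ≤ N ∧
    ((a * x' - b * y' : ℤ) = a * x - b * y + d) ∧
    ∀ u v : ℕ, u + v ≤ N →
      ¬ ((a * x - b * y : ℤ) < a * u - b * v ∧ (a * u - b * v : ℤ) < a * x' - b * y')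

theorem TT.toEE {a b d : ℕ} (ha : 0 < a) (hb : 0 < b) (hd : 0 < d) (h : TT a b d) : EE a b d := by
  obtain ⟨N, x, y, x', y', h1, h2, h3, H⟩ := h
  have ha' : (0 : ℤ) < a := by exact_mod_cast ha
  have hb' : (0 : ℤ) < b := by exact_mod_cast hb
  have hd' : (0 : ℤ) < d := by exact_mod_cast hd
  rcases le_or_gt x x' with hx | hx
  · rcases le_or_gt y y' with hy | hy
    · refine key_arith (a + b) a b (x' - x) (y' - y) d le_rfl hd ?_ ?_
      · push_cast [hx, hy]; linarith
      · rintro m n hm hn ⟨p1, p2⟩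
        apply H (x + m) (y + n) (by omega)
        push_cast
        constructor <;> linarith
    · rcases eq_or_lt_of_le hx with hx | hx
      · subst hx
        refine key_arith (b + a) b a (y - y') 0 d le_rfl hd ?_ ?_ |>.swap
        · push_cast [hy.le]; linarith
        · rintro m n hm hn ⟨p1, p2⟩
          have : n = 0 := by omega
          subst this
          apply H x (y' + m) (by omega)
          push_cast at *
          constructor <;> linarith
      · exfalso
        have e1 : (x : ℤ) + 1 ≤ x' := by exact_mod_cast hx
        have e2 : (y' : ℤ) + 1 ≤ y := by exact_mod_cast hy
        apply H x (y - 1) (by omega)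
        have : 1 ≤ y := by omega
        push_cast [this]
        constructor <;> nlinarith [mul_le_mul_of_nonneg_left e1 ha'.le, mul_le_mul_of_nonneg_left e2 hb'.le]
  · rcases le_or_gt y' y with hy | hy
    · refine key_arith (b + a) b a (y - y') (x - x') d le_rfl hd ?_ ?_ |>.swap
      · push_cast [hx.le, hy]; linarith
      · rintro m n hm hn ⟨p1, p2⟩
        apply H (x' + n) (y' + m) (by omega)
        push_cast
        constructor <;> linarith
    · exfalso
      have e1 : (x' : ℤ) ≤ x := by exact_mod_cast hx.le
      have e2 : (y : ℤ) ≤ y' := by exact_mod_cast hy.le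
      nlinarith [mul_le_mul_of_nonneg_left e1 ha'.le, mul_le_mul_of_nonneg_left e2 hb'.le]

/-- Emptiness of the gap. -/
theorem gap_aux (A1 A2 C1 C2 α β m n : ℤ) (hA1 : 0 ≤ A1) (hA2 : 0 ≤ A2) (hC1 : 0 ≤ C1) (hC2 : 0 ≤ C2)
    (hA : 1 ≤ A1 + A2) (hC : 1 ≤ C1 + C2) (hα : 0 ≤ α) (hβ : 0 ≤ β)
    (hx : 0 ≤ m * A1 + n * C1) (hy : 0 ≤ m * A2 + n * C2)
    (hN : m * (A1 + A2) + n * (C1 + C2) ≤ A1 + A2) :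
    ¬ (0 < m * α - n * β ∧ m * α - n * β < α) := by
  rintro ⟨h1, h2⟩
  rcases le_or_gt m 0 with hm | hm
  · rcases le_or_gt 0 n with hn | hn
    · nlinarith [mul_nonneg hn hβ, mul_nonneg (neg_nonneg.2 hm) hα]
    · nlinarith [mul_nonneg (neg_nonneg.2 hm) (by omega : 0 ≤ A1 + A2),
        mul_pos (neg_pos.2 hn) (by omega : 0 < C1 + C2)]
  · have hm' : 0 ≤ m - 1 := by omega
    rcases lt_or_ge 0 n with hn | hn
    · nlinarith [mul_nonneg hm' (by omega : 0 ≤ A1 + A2), mul_pos hn (by omega : 0 < C1 + C2)]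
    · nlinarith [mul_nonneg hm' hα, mul_nonneg (neg_nonneg.2 hn) hβ]

theorem EE.toTT {a b : ℕ} {α β d : ℕ} (h : EE α β d) : ∀ (A1 A2 C1 C2 : ℕ),
    1 ≤ A1 + A2 → 1 ≤ C1 + C2 → (A1 * C2 - A2 * C1 : ℤ) = 1 →
    (a * A1 - b * A2 : ℤ) = α → (a * C1 - b * C2 : ℤ) = -β → TT a b d := by
  induction h with
  | left α β =>
    intro A1 A2 C1 C2 hA hC hdet h1 h2
    refine ⟨A1 + A2, 0, 0, A1, A2, by omega, le_rfl, by push_cast; linarith, ?_⟩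
    intro u v huv
    have := gap_aux A1 A2 C1 C2 α β (u * C2 - v * C1) (v * A1 - u * A2)
      (by positivity) (by positivity) (by positivity) (by positivity)
      (by exact_mod_cast hA) (by exact_mod_cast hC) (by positivity) (by positivity)
    have e1 : ((u * C2 - v * C1) * A1 + (v * A1 - u * A2) * C1 : ℤ) = u := by
      linear_combination (u : ℤ) * hdet
    have e2 : ((u * C2 - v * C1) * A2 + (v * A1 - u * A2) * C2 : ℤ) = v := by
      linear_combination (v : ℤ) * hdet
    have e3 : ((u * C2 - v * C1) * α - (v * A1 - u * A2) * β : ℤ) = a * u - b * v := by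
      linear_combination (-(u * C2 - v * C1 : ℤ)) * h1 - (v * A1 - u * A2 : ℤ) * h2 + (a : ℤ) * e1 - (b : ℤ) * e2
    rw [e1, e2, e3] at this
    have hN : (u + v : ℤ) ≤ A1 + A2 := by exact_mod_cast huv
    have := this (by positivity) (by positivity) (by linarith)
    rw [h1]; simpa using this
  | right α β =>
    intro A1 A2 C1 C2 hA hC hdet h1 h2
    refine ⟨C1 + C2, C1, C2, 0, 0, le_rfl, by omega, by push_cast; linarith, ?_⟩
    intro u v huv
    have := gap_aux C1 C2 A1 A2 β α (v * A1 - u * A2) (u * C2 - v * C1)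
      (by positivity) (by positivity) (by positivity) (by positivity)
      (by exact_mod_cast hC) (by exact_mod_cast hA) (by positivity) (by positivity)
    have e1 : ((v * A1 - u * A2) * C1 + (u * C2 - v * C1) * A1 : ℤ) = u := by
      linear_combination (u : ℤ) * hdet
    have e2 : ((v * A1 - u * A2) * C2 + (u * C2 - v * C1) * A2 : ℤ) = v := by
      linear_combination (v : ℤ) * hdet
    have e3 : ((v * A1 - u * A2) * β - (u * C2 - v * C1) * α : ℤ) = - (a * u - b * v) := by
      linear_combination ((u * C2 - v * C1 : ℤ)) * h1 + (v * A1 - u * A2 : ℤ) * h2 - (a : ℤ) * e1 + (b : ℤ) * e2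
    rw [e1, e2, e3] at this
    have hN : (u + v : ℤ) ≤ C1 + C2 := by exact_mod_cast huv
    have := this (by positivity) (by positivity) (by linarith)
    rw [h2]
    rintro ⟨p1, p2⟩
    push_cast at p2
    exact this ⟨by linarith, by linarith⟩
  | subl α β d hle hpos _ ih =>
    intro A1 A2 C1 C2 hA hC hdet h1 h2
    refine ih (A1 + C1) (A2 + C2) C1 C2 (by omega) hC ?_ ?_ h2
    · push_cast; linarith
    · push_cast [hle]; linarith
  | subr α β d hle hpos _ ih =>
    intro A1 A2 C1 C2 hA hC hdet h1 h2
    refine ih A1 A2 (A1 + C1) (A2 + C2) hA (by omega) ?_ h1 ?_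
    · push_cast; linarith
    · push_cast [hle]; linarith

theorem fact_aux (s1 s2 s3 : ℕ) (h1 : 0 < s1) (h2 : 0 < s2) (h3 : 0 < s3)
    (c12 : Nat.Coprime s1 s2) (c13 : Nat.Coprime s1 s3) (c23 : Nat.Coprime s2 s3)
    (a1 a2 a3 b1 b2 b3 : ℕ)
    (h : a1 * (s2 * s3) + a2 * (s1 * s3) + a3 * (s1 * s2)
      = b1 * (s2 * s3) + b2 * (s1 * s3) + b3 * (s1 * s2)) :
    ∃ k1 k2 k3 : ℤ, k1 + k2 + k3 = 0 ∧ (b1 : ℤ) = a1 + s1 * k1 ∧ (b2 : ℤ) = a2 + s2 * k2 ∧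
      (b3 : ℤ) = a3 + s3 * k3 := by
  have hz : ((b1 : ℤ) - a1) * (s2 * s3) + (b2 - a2) * (s1 * s3) + (b3 - a3) * (s1 * s2) = 0 := by
    have : ((a1 * (s2 * s3) + a2 * (s1 * s3) + a3 * (s1 * s2) : ℕ) : ℤ)
      = ((b1 * (s2 * s3) + b2 * (s1 * s3) + b3 * (s1 * s2) : ℕ) : ℤ) := by rw [h]
    push_cast at this; linarith
  have C1 : IsCoprime (s1 : ℤ) (s2 * s3) := by
    exact_mod_cast Nat.isCoprime_iff_coprime.2 (c12.mul_right c13)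
  have C2 : IsCoprime (s2 : ℤ) (s1 * s3) := by
    exact_mod_cast Nat.isCoprime_iff_coprime.2 (c12.symm.mul_right c23)
  have C3 : IsCoprime (s3 : ℤ) (s1 * s2) := by
    exact_mod_cast Nat.isCoprime_iff_coprime.2 (c13.symm.mul_right c23.symm)
  obtain ⟨k1, e1⟩ : (s1 : ℤ) ∣ b1 - a1 := C1.dvd_of_dvd_mul_right
    ⟨-((b2 - a2) * s3 + (b3 - a3) * s2), by linear_combination hz⟩
  obtain ⟨k2, e2⟩ : (s2 : ℤ) ∣ b2 - a2 := C2.dvd_of_dvd_mul_right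
    ⟨-((b1 - a1) * s3 + (b3 - a3) * s1), by linear_combination hz⟩
  obtain ⟨k3, e3⟩ : (s3 : ℤ) ∣ b3 - a3 := C3.dvd_of_dvd_mul_right
    ⟨-((b1 - a1) * s2 + (b2 - a2) * s1), by linear_combination hz⟩
  refine ⟨k1, k2, k3, ?_, by linarith, by linarith, by linarith⟩
  rw [e1, e2, e3] at hz
  have : (s1 * s2 * s3 : ℤ) * (k1 + k2 + k3) = 0 := by linear_combination hz
  rcases mul_eq_zero.1 this with h | h
  · have : (0 : ℤ) < s1 * s2 * s3 := by positivity
    omega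
  · exact h

theorem quot_aux (s q r : ℕ) (k : ℤ) (b : ℕ) (hs : 0 < s) (hr : r < s)
    (h : (b : ℤ) = (s * q + r : ℕ) + s * k) : ∃ t : ℕ, (t : ℤ) = q + k ∧ b = s * t + r := by
  have hs' : (0 : ℤ) < s := by exact_mod_cast hs
  have hr' : (r : ℤ) + 1 ≤ s := by exact_mod_cast hr
  have h0 : 0 ≤ (q : ℤ) + k := by
    by_contra hc
    have hc : (q : ℤ) + k ≤ -1 := by omega
    push_cast at h
    have : (0 : ℤ) ≤ b := by positivity
    nlinarith [mul_le_mul_of_nonneg_left hc hs'.le]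
  refine ⟨((q : ℤ) + k).toNat, Int.toNat_of_nonneg h0, ?_⟩
  zify
  rw [Int.toNat_of_nonneg h0, h]
  push_cast; ring

theorem delta_iff (s1 s2 s3 : ℕ) (h3 : 2 ≤ s3) (h32 : s3 < s2) (h21 : s2 < s1)
    (c12 : Nat.Coprime s1 s2) (c13 : Nat.Coprime s1 s3) (c23 : Nat.Coprime s2 s3) (d : ℕ) :
    d ∈ DeltaS (s2 * s3) (s1 * s3) (s1 * s2) ↔ 0 < d ∧ TT (s1 - s2) (s2 - s3) d := by
  have p1 : 0 < s1 := by omega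
  have p2 : 0 < s2 := by omega
  have p3 : 0 < s3 := by omega
  -- the lengths of a coset
  have struct : ∀ (r1 r2 r3 q1 q2 q3 : ℕ), r1 < s1 → r2 < s2 → r3 < s3 → ∀ t : ℕ,
      (t ∈ Lset (s2 * s3) (s1 * s3) (s1 * s2)
        ((s1 * q1 + r1) * (s2 * s3) + (s2 * q2 + r2) * (s1 * s3) + (s3 * q3 + r3) * (s1 * s2)) ↔
       ∃ x y : ℕ, x + y ≤ q1 + q2 + q3 ∧
        (t : ℤ) = (r1 + r2 + r3 + s2 * (q1 + q2 + q3) : ℤ)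
          + (((s1 - s2 : ℕ) : ℤ) * x - ((s2 - s3 : ℕ) : ℤ) * y)) := by
    intro r1 r2 r3 q1 q2 q3 l1 l2 l3 t
    constructor
    · rintro ⟨⟨b1, b2, b3⟩, hb, rfl⟩
      simp only [Zset, Set.mem_setOf_eq] at hb
      obtain ⟨k1, k2, k3, hk, e1, e2, e3⟩ :=
        fact_aux s1 s2 s3 p1 p2 p3 c12 c13 c23 _ _ _ _ _ _ hb.symm
      obtain ⟨x, hx, rfl⟩ := quot_aux _ _ _ _ _ p1 l1 e1
      obtain ⟨w, hw, rfl⟩ := quot_aux _ _ _ _ _ p2 l2 e2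
      obtain ⟨y, hy, rfl⟩ := quot_aux _ _ _ _ _ p3 l3 e3
      have hN : (x + w + y : ℤ) = q1 + q2 + q3 := by linarith
      refine ⟨x, y, by omega, ?_⟩
      simp only [len]
      push_cast [h21.le, h32.le]
      linear_combination (s2 : ℤ) * hN
    · rintro ⟨x, y, hxy, ht⟩
      obtain ⟨w, hw⟩ := Nat.exists_eq_add_of_le hxy
      have hN : (q1 + q2 + q3 : ℤ) = x + y + w := by exact_mod_cast hw
      refine ⟨(s1 * x + r1, s2 * w + r2, s3 * y + r3), ?_, ?_⟩
      · simp only [Zset, Set.mem_setOf_eq]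
        zify
        linear_combination (-(s1 * s2 * s3 : ℤ)) * hN
      · simp only [len]
        zify
        rw [ht]
        push_cast [h21.le, h32.le]
        linear_combination (-(s2 : ℤ)) * hN
  constructor
  · rintro ⟨s, -, l, l', hl, hl', hlt, rfl, H⟩
    obtain ⟨⟨z1, z2, z3⟩, hz, -⟩ := id hl
    simp only [Zset, Set.mem_setOf_eq] at hz
    have S := struct (z1 % s1) (z2 % s2) (z3 % s3) (z1 / s1) (z2 / s2) (z3 / s3)
      (Nat.mod_lt _ p1) (Nat.mod_lt _ p2) (Nat.mod_lt _ p3)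
    rw [Nat.div_add_mod, Nat.div_add_mod, Nat.div_add_mod, hz] at S
    refine ⟨by omega, ?_⟩
    obtain ⟨x', y', hN', e'⟩ := (S l).1 hl
    obtain ⟨x, y, hN, e⟩ := (S l').1 hl'
    refine ⟨_, x, y, x', y', hN, hN', ?_, ?_⟩
    · rw [Nat.cast_sub hlt.le]; linarith
    · rintro u v huv ⟨g1, g2⟩
      set K : ℤ := (((z1 % s1 : ℕ) : ℤ) + ((z2 % s2 : ℕ) : ℤ) + ((z3 % s3 : ℕ) : ℤ) + s2 * (((z1 / s1 : ℕ) : ℤ) + ((z2 / s2 : ℕ) : ℤ) + ((z3 / s3 : ℕ) : ℤ))) with hK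
      have h0 : 0 ≤ K + (((s1 - s2 : ℕ) : ℤ) * u - ((s2 - s3 : ℕ) : ℤ) * v) := by
        have : (0 : ℤ) ≤ l' := by positivity
        linarith
      have ht := Int.toNat_of_nonneg h0
      refine H _ ((S _).2 ⟨u, v, huv, ht⟩) ⟨?_, ?_⟩
      · zify; rw [ht]; linarith
      · zify; rw [ht]; linarith
  · rintro ⟨hd, N, x, y, x', y', hN, hN', he, H⟩
    have S := struct 0 0 0 0 N 0 p1 p2 p3
    simp only [Nat.zero_add, Nat.add_zero] at S
    set s := (s1 * 0) * (s2 * s3) + (s2 * N) * (s1 * s3) + (s3 * 0) * (s1 * s2) with hs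
    have ex : ∀ u v : ℕ, u + v ≤ N → ∃ t : ℕ, (t : ℤ) = s2 * N
        + (((s1 - s2 : ℕ) : ℤ) * u - ((s2 - s3 : ℕ) : ℤ) * v) := by
      intro u v huv
      obtain ⟨w, rfl⟩ := Nat.exists_eq_add_of_le huv
      refine ⟨s1 * u + s2 * w + s3 * v, ?_⟩
      push_cast [h21.le, h32.le]; ring
    obtain ⟨l', hl'⟩ := ex x y hN
    obtain ⟨l, hl⟩ := ex x' y' hN'
    refine ⟨s, ⟨s1 * 0, s2 * N, s3 * 0, rfl⟩, l, l', (S l).2 ⟨x', y', hN', ?_⟩,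
      (S l').2 ⟨x, y, hN, ?_⟩, ?_, ?_, ?_⟩
    · push_cast; linarith
    · push_cast; linarith
    · omega
    · omega
    · rintro t ht ⟨g1, g2⟩
      obtain ⟨u, v, huv, e⟩ := (S t).1 ht
      push_cast at e
      refine H u v huv ⟨?_, ?_⟩
      · have : (l' : ℤ) < t := by exact_mod_cast g1
        linarith
      · have : (t : ℤ) < l := by exact_mod_cast g2
        linarith

/-- Theorem (one Betti element case): for pairwise coprime `s1 > s2 > s3 ≥ 2`, the Delta
set of the symmetric numerical semigroup `⟨s2*s3, s1*s3, s1*s2⟩` equals the Euclid set of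
`δ1 = s1 - s2` and `δ2 = s2 - s3`, minus zero. -/
theorem delta_eq_euclid_one_betti (s1 s2 s3 : ℕ) (h3 : 2 ≤ s3) (h32 : s3 < s2) (h21 : s2 < s1)
    (c12 : Nat.Coprime s1 s2) (c13 : Nat.Coprime s1 s3) (c23 : Nat.Coprime s2 s3) :
    DeltaS (s2 * s3) (s1 * s3) (s1 * s2) = Euc (s1 - s2) (s2 - s3) \ {0} := by
  ext d
  rw [delta_iff s1 s2 s3 h3 h32 h21 c12 c13 c23 d, Set.mem_diff, Set.mem_singleton_iff,
    mem_Euc_iff (by omega) (by omega)]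
  constructor
  · rintro ⟨hd, h⟩
    exact ⟨h.toEE (by omega) (by omega) hd, by omega⟩
  · rintro ⟨h, hd⟩
    exact ⟨by omega, h.toTT 1 0 0 1 (by omega) (by omega) (by simp) (by simp) (by simp)⟩
end

section
/- Let δ1, δ2 be positive integers with g = gcd(δ1,δ2), set η1 = max{δ1,δ2}, η2 = min{δ1,δ2}, and assume η2 does not divide η1, so η3 = η1 mod η2 > 0. Let x be a multiple of g with η3 ≤ x ≤ η1 and x ∉ D(η1,η2) ∪ D(η2,η3), and write x^(η1,η2) = (x1,x2) (so that x1 > 0 and x2 < 0). Then there exists an integer d ∈ D(η1,η2) with d < x such that d^(η1,η2) = (d1,d2) satisfies 0 < d1 < x1 and x2 < d2 < 0. -/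
/-- For `x` a multiple of `g` with `η3 ≤ x ≤ η1`, `x ∉ D(η1,η2) ∪ D(η2,η3)`, and
canonical representation `x = x1*η1 + x2*η2` with `0 < x1 ≤ η2/g`, `-η1/g < x2 ≤ 0`,
there is `d ∈ D(η1,η2)` with `d < x` whose canonical representation `(d1,d2)` satisfies
`0 < d1 < x1` and `x2 < d2 < 0`. -/
theorem exists_basement_unprimed (δ1 δ2 : ℕ) (h1 : 0 < δ1) (h2 : 0 < δ2)
    (hnd : ¬ (min δ1 δ2 ∣ max δ1 δ2)) (x : ℕ) (hdvd : Nat.gcd δ1 δ2 ∣ x)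
    (hxlo : (max δ1 δ2 % min δ1 δ2) ≤ x) (hxhi : x ≤ max δ1 δ2)
    (hxnot : x ∉ Dset (max δ1 δ2) (min δ1 δ2) 0 ∪ Dset (min δ1 δ2) (max δ1 δ2 % min δ1 δ2) 0)
    (x1 x2 : ℤ)
    (hrep : (x : ℤ) = x1 * (max δ1 δ2) + x2 * (min δ1 δ2) ∧
        0 < x1 ∧ x1 ≤ ((min δ1 δ2 / Nat.gcd δ1 δ2 : ℕ) : ℤ) ∧ -((max δ1 δ2 / Nat.gcd δ1 δ2 : ℕ) : ℤ) < x2 ∧ x2 ≤ 0) :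
    ∃ d : ℕ, d ∈ Dset (max δ1 δ2) (min δ1 δ2) 0 ∧ d < x ∧
      ∃ d1 d2 : ℤ, (d : ℤ) = d1 * (max δ1 δ2) + d2 * (min δ1 δ2) ∧
        0 < d1 ∧ d1 < x1 ∧ x2 < d2 ∧ d2 < 0 := by
  obtain ⟨hx, hx1, -, -, -⟩ := hrep
  have hle : min δ1 δ2 ≤ max δ1 δ2 := le_trans (min_le_left _ _) (le_max_left _ _)
  have hpos : 0 < min δ1 δ2 := lt_min h1 h2
  clear hdvd
  generalize max δ1 δ2 = a at *
  generalize min δ1 δ2 = b at *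
  have hq : 0 < a / b := Nat.div_pos hle hpos
  have hr : 0 < a % b := Nat.pos_of_ne_zero (fun h => hnd (Nat.dvd_of_mod_eq_zero h))
  have hdm : a / b * b + a % b = a := Nat.div_add_mod' a b
  have hrb : a % b < b := Nat.mod_lt _ hpos
  have hmem : a % b ∈ Dset a b 0 := ⟨a / b, Nat.zero_le _, le_rfl, by omega⟩
  have hlt : a % b < x := lt_of_le_of_ne hxlo (fun h => hxnot (Or.inl (h ▸ hmem)))
  have hdmz : ((a / b : ℕ) : ℤ) * b + ((a % b : ℕ) : ℤ) = a := by exact_mod_cast hdm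
  have hbz : (0 : ℤ) < b := by exact_mod_cast hpos
  have hrz : (0 : ℤ) < ((a % b : ℕ) : ℤ) := by exact_mod_cast hr
  have hrbz : ((a % b : ℕ) : ℤ) < b := by exact_mod_cast hrb
  have hxz : (x : ℤ) ≤ a := by exact_mod_cast hxhi
  have hx0 : (0 : ℤ) ≤ x := by positivity
  have haz : (0 : ℤ) ≤ a := by positivity
  have hx1' : 1 < x1 := by
    by_contra hc
    have h11 : x1 = 1 := by omega
    subst h11
    apply hxnot
    left
    have hx2 : x2 ≤ 0 := by
      by_contra h
      nlinarith
    obtain ⟨k, hk⟩ := Int.eq_ofNat_of_zero_le (neg_nonneg.mpr hx2)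
    have hk' : x2 = -(k : ℤ) := by omega
    subst hk'
    have hsum : x + k * b = a := by
      zify
      linarith
    refine ⟨k, Nat.zero_le _, (Nat.le_div_iff_mul_le hpos).mpr (by omega), by omega⟩
  refine ⟨a % b, hmem, hlt, 1, -((a / b : ℕ) : ℤ), by linarith, one_pos, hx1', ?_, by omega⟩
  by_contra hc
  push Not at hc
  nlinarith [mul_le_mul_of_nonneg_right hc hbz.le, mul_le_mul_of_nonneg_right (show (2:ℤ) ≤ x1 by omega) haz]
end

section
/- Let δ1, δ2 be positive integers with g = gcd(δ1,δ2), set η1 = max{δ1,δ2}, η2 = min{δ1,δ2}, and assume η2 does not divide η1, so η3 = η1 mod η2 > 0. Let x be a multiple of g with η3 ≤ x ≤ η1 and x ∉ D(η1,η2) ∪ D(η2,η3), and write x'^(η1,η2) = (x1',x2') (so that x1' ≤ 0 and x2' > 0). Then there exists an integer d ∈ D(η2,η3) with d < x such that d'^(η1,η2) = (d1',d2') satisfies x1' ≤ d1' ≤ 0 and 0 < d2' < x2'; moreover d1' = 0 occurs only when x is a multiple of η2. -/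
theorem basement_aux (a b x : ℕ) (hb : 0 < b) (hnd : ¬ b ∣ a) (hxlo : a % b ≤ x)
    (hxnot : x ∉ Dset b (a % b) 0) (x1 x2 : ℤ)
    (hrep : (x : ℤ) = x1 * (a : ℤ) + x2 * (b : ℤ)) (hx1 : x1 ≤ 0) :
    ∃ d : ℕ, d ∈ Dset b (a % b) 0 ∧ d < x ∧
      ∃ d1' d2' : ℤ, (d : ℤ) = d1' * (a : ℤ) + d2' * (b : ℤ) ∧
        x1 ≤ d1' ∧ d1' ≤ 0 ∧ 0 < d2' ∧ d2' < x2 ∧ (d1' = 0 → b ∣ x) := by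
  have hc : 0 < a % b := Nat.pos_of_ne_zero (fun h => hnd (Nat.dvd_of_mod_eq_zero h))
  have hcb : a % b < b := Nat.mod_lt _ hb
  have hak : b * (a / b) + a % b = a := Nat.div_add_mod a b
  generalize a % b = c at *
  generalize a / b = k at *
  obtain ⟨p, rfl⟩ : ∃ p : ℕ, x1 = -(p : ℤ) := ⟨x1.natAbs, by omega⟩
  obtain ⟨n, rfl⟩ : ∃ n : ℤ, x2 = n + p * k := ⟨x2 - p * k, by ring⟩
  have ha : (a : ℤ) = b * k + c := by exact_mod_cast hak.symm
  have hx : (x : ℤ) = n * b - p * c := by rw [hrep, ha]; ring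
  have hn1 : 1 ≤ n := by
    by_contra h
    have h0 : n ≤ 0 := by omega
    have : (0 : ℤ) ≤ p * c := by positivity
    have : n * (b : ℤ) ≤ 0 := mul_nonpos_of_nonpos_of_nonneg h0 (by positivity)
    omega
  have hn : 2 ≤ n := by
    by_contra h
    have h0 : n = 1 := by omega
    subst h0
    apply hxnot
    have : p * c ≤ b := by zify; linarith [Int.natCast_nonneg x]
    refine ⟨p, Nat.zero_le _, (Nat.le_div_iff_mul_le hc).2 this, ?_⟩
    zify [this]; linarith
  have key : ∀ q : ℕ, q ≤ p → q ≤ b / c → b - q * c < x → (q = 0 → b ∣ x) →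
      ∃ d : ℕ, d ∈ Dset b c 0 ∧ d < x ∧
      ∃ d1' d2' : ℤ, (d : ℤ) = d1' * (a : ℤ) + d2' * (b : ℤ) ∧
        -(p : ℤ) ≤ d1' ∧ d1' ≤ 0 ∧ 0 < d2' ∧ d2' < n + p * k ∧ (d1' = 0 → b ∣ x) := by
    intro q hqp hqQ hlt hz
    have hqc : q * c ≤ b := (Nat.le_div_iff_mul_le hc).1 hqQ
    have hm : (q : ℤ) * k ≤ p * k := by exact_mod_cast Nat.mul_le_mul_right k hqp
    have hm0 : (0 : ℤ) ≤ q * k := by positivity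
    refine ⟨b - q * c, ⟨q, Nat.zero_le _, hqQ, rfl⟩, hlt, -q, 1 + q * k, ?_, by omega, by omega,
      by omega, by omega, fun h => hz (by omega)⟩
    rw [ha]; zify [hqc]; ring
  by_cases hpQ : p ≤ b / c
  · have hqc : p * c ≤ b := (Nat.le_div_iff_mul_le hc).1 hpQ
    refine key p le_rfl hpQ ?_ ?_
    · zify [hqc]; rw [hx]; nlinarith
    · intro h
      subst h
      exact Int.natCast_dvd_natCast.1 ⟨n, by rw [hx]; push_cast; ring⟩
  · refine key (b / c) (by omega) le_rfl ?_ ?_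
    · have := Nat.div_add_mod b c
      have := Nat.mod_lt b hc
      rw [mul_comm (b / c) c]
      omega
    · intro h
      have := Nat.div_pos hcb.le hc
      omega

/-- For `x` a multiple of `g` with `η3 ≤ x ≤ η1`, `x ∉ D(η1,η2) ∪ D(η2,η3)`, and primed
representation `x = x1'*η1 + x2'*η2` with `-η2/g < x1' ≤ 0`, `0 < x2' ≤ η1/g`, there is
`d ∈ D(η2,η3)` with `d < x` whose primed representation `(d1',d2')` satisfies
`x1' ≤ d1' ≤ 0` and `0 < d2' < x2'`; and `d1' = 0` only when `η2 ∣ x`. -/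
theorem exists_basement_primed (δ1 δ2 : ℕ) (h1 : 0 < δ1) (h2 : 0 < δ2)
    (hnd : ¬ (min δ1 δ2 ∣ max δ1 δ2)) (x : ℕ) (hdvd : Nat.gcd δ1 δ2 ∣ x)
    (hxlo : (max δ1 δ2 % min δ1 δ2) ≤ x) (hxhi : x ≤ max δ1 δ2)
    (hxnot : x ∉ Dset (max δ1 δ2) (min δ1 δ2) 0 ∪ Dset (min δ1 δ2) (max δ1 δ2 % min δ1 δ2) 0)
    (x1' x2' : ℤ)
    (hrep : (x : ℤ) = x1' * (max δ1 δ2) + x2' * (min δ1 δ2) ∧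
        -((min δ1 δ2 / Nat.gcd δ1 δ2 : ℕ) : ℤ) < x1' ∧ x1' ≤ 0 ∧ 0 < x2' ∧ x2' ≤ ((max δ1 δ2 / Nat.gcd δ1 δ2 : ℕ) : ℤ)) :
    ∃ d : ℕ, d ∈ Dset (min δ1 δ2) (max δ1 δ2 % min δ1 δ2) 0 ∧ d < x ∧
      ∃ d1' d2' : ℤ, (d : ℤ) = d1' * (max δ1 δ2) + d2' * (min δ1 δ2) ∧
        x1' ≤ d1' ∧ d1' ≤ 0 ∧ 0 < d2' ∧ d2' < x2' ∧
        (d1' = 0 → min δ1 δ2 ∣ x) := by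
  have hb : 0 < min δ1 δ2 := lt_min h1 h2
  have H := basement_aux (max δ1 δ2) (min δ1 δ2) x hb hnd hxlo
    (fun h => hxnot (Or.inr h)) x1' x2' (by simpa using hrep.1) hrep.2.2.1
  simpa using H
end

section
/- Let δ1, δ2 be positive integers with g = gcd(δ1,δ2), set η1 = max{δ1,δ2}, η2 = min{δ1,δ2}, η_{k+2} = η_k mod η_{k+1} while η_{k+1} > 0, and assume η3 > 0. Let x be a positive multiple of g with x < η3 and x ∉ Euc(δ1,δ2), and let j ≥ 3 be the index with η_{j+1} ≤ x ≤ η_j. Then: (a) writing x^(η1,η2) = (x1,x2), there exists d ∈ D(η_{j−1},η_j) ∪ D(η_j,η_{j+1}) with d < x and d^(η1,η2) = (d1,d2) satisfying 0 < d1 < x1 and x2 < d2 < 0; (b) writing x'^(η1,η2) = (x1',x2'), there exists d ∈ D(η_{j−1},η_j) ∪ D(η_j,η_{j+1}) with d < x and d'^(η1,η2) = (d1',d2') satisfying x1' < d1' < 0 and 0 < d2' < x2'. -/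
def PInv (A B H K : ℤ) : Prop :=
  ∃ s t s' t' : ℤ, 0 < s ∧ 0 < t ∧ 0 < s' ∧ 0 < t' ∧ H = s * A - t * B ∧
    K = t' * B - s' * A ∧ s * t' - t * s' = 1

lemma PInv_step {A B H K q : ℤ} (hq : 0 ≤ q) (h : PInv A B H K) : PInv B A K (H - q * K) := by
  obtain ⟨s, t, s', t', hs, ht, hs', ht', hH, hK, hd⟩ := h
  refine ⟨t', s', t + q * t', s + q * s', ht', hs', by positivity, by positivity, hK, ?_, ?_⟩
  · rw [hH, hK]; ring
  · linarith

lemma eta_rec (a b n : ℕ) : (etaSeq a b (n+2) : ℤ) =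
    etaSeq a b n - ((etaSeq a b n / etaSeq a b (n+1) : ℕ) : ℤ) * etaSeq a b (n+1) := by
  have h := Nat.mod_add_div (etaSeq a b n) (etaSeq a b (n+1))
  have e : etaSeq a b (n+2) = etaSeq a b n % etaSeq a b (n+1) := by rw [etaSeq]
  rw [← e] at h
  have h' : (etaSeq a b (n+2) : ℤ) + etaSeq a b (n+1) * ((etaSeq a b n / etaSeq a b (n+1) : ℕ) : ℤ)
    = etaSeq a b n := by exact_mod_cast h
  linarith

lemma eta_lt (a b n : ℕ) (h : 0 < etaSeq a b (n+1)) : etaSeq a b (n+2) < etaSeq a b (n+1) := by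
  have e : etaSeq a b (n+2) = etaSeq a b n % etaSeq a b (n+1) := by rw [etaSeq]
  rw [e]; exact Nat.mod_lt _ h

lemma eta_inv (a b : ℕ) (hb : 0 < b) (hab : b ≤ a) (h2 : 0 < etaSeq a b 2) (k : ℕ) :
    PInv a b (etaSeq a b (k+2)) (etaSeq a b (k+3)) ∨
    PInv b a (etaSeq a b (k+2)) (etaSeq a b (k+3)) := by
  induction k with
  | zero =>
    left
    have r0 := eta_rec a b 0
    have r1 := eta_rec a b 1
    have e0 : etaSeq a b 0 = a := by rw [etaSeq]
    have e1 : etaSeq a b 1 = b := by rw [etaSeq]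
    have hl := eta_lt a b 0 (by simpa [e1] using hb)
    simp only [zero_add, Nat.reduceAdd, e0, e1] at *
    have q0 : (0:ℤ) < ((a / b : ℕ) : ℤ) := by exact_mod_cast Nat.div_pos hab hb
    have q1 : (0:ℤ) < ((b / etaSeq a b 2 : ℕ) : ℤ) := by exact_mod_cast Nat.div_pos hl.le h2
    generalize ((a / b : ℕ) : ℤ) = u at *
    generalize ((b / etaSeq a b 2 : ℕ) : ℤ) = v at *
    refine ⟨1, u, v, 1 + u * v, one_pos, q0, q1, by positivity, by linarith, ?_, by ring⟩
    rw [r1, r0]; ring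
  | succ k ih =>
    have r := eta_rec a b (k+2)
    have e : k + 1 + 3 = k + 2 + 2 := by ring
    rw [e, r]
    rcases ih with h | h
    · right; exact PInv_step (by positivity) h
    · left; exact PInv_step (by positivity) h

lemma dset_top (a b n lo : ℕ) (h : lo ≤ etaSeq a b n / etaSeq a b (n+1)) :
    etaSeq a b (n+2) ∈ Dset (etaSeq a b n) (etaSeq a b (n+1)) lo := by
  refine ⟨_, h, le_rfl, ?_⟩
  have e : etaSeq a b (n+2) = etaSeq a b n % etaSeq a b (n+1) := by rw [etaSeq]
  rw [e]
  have h := Nat.mod_add_div (etaSeq a b n) (etaSeq a b (n+1))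
  rw [mul_comm] at h
  omega

lemma dset_top' (a b n : ℕ) (h1 : 0 < etaSeq a b (n+1)) (h2 : 0 < etaSeq a b (n+2)) (hn : 1 ≤ n) :
    1 ≤ etaSeq a b n / etaSeq a b (n+1) := by
  obtain ⟨m, rfl⟩ := Nat.exists_eq_add_of_le' hn
  have e : etaSeq a b (m+1+2) = etaSeq a b (m+1) % etaSeq a b (m+1+1) := by rw [etaSeq]
  apply Nat.div_pos _ h1
  by_contra hc
  push Not at hc
  rw [e, Nat.mod_eq_of_lt hc] at h2
  exact lt_asymm hc (eta_lt a b m h2)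

lemma eta_mem (δ1 δ2 : ℕ) (h1 : 0 < etaSeq (max δ1 δ2) (min δ1 δ2) 1)
    (h2 : 0 < etaSeq (max δ1 δ2) (min δ1 δ2) 2) (j : ℕ) :
    0 < etaSeq (max δ1 δ2) (min δ1 δ2) j → etaSeq (max δ1 δ2) (min δ1 δ2) j ∈ Euc δ1 δ2 := by
  induction j using Nat.strong_induction_on with
  | _ j ih =>
    intro hj
    match j, ih, hj with
    | 0, _, _ => exact ⟨0, h1, 0, by simp, by simp, by simp⟩
    | 1, _, _ => exact ⟨1, h2, 0, by simp, by simp, by simp⟩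
    | n+2, ih, hj =>
      rcases Nat.eq_zero_or_pos (etaSeq (max δ1 δ2) (min δ1 δ2) (n+1)) with h0 | h0
      · have e : etaSeq (max δ1 δ2) (min δ1 δ2) (n+2) = etaSeq (max δ1 δ2) (min δ1 δ2) n := by
          rw [etaSeq, h0, Nat.mod_zero]
        rw [e] at hj ⊢
        exact ih n (by omega) hj
      · refine ⟨n, h0, dset_top _ _ _ _ ?_⟩
        split_ifs with hn
        · exact Nat.zero_le _
        · exact dset_top' _ _ _ h0 hj (by omega)

lemma core_pre {A B : ℤ} {H K x : ℕ} (hP : PInv A B H K) (hx : 0 < x) (hH : x < H)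
    (hrep : ∃ x1 x2 : ℤ, (x : ℤ) = x1 * A + x2 * B) : 0 < K := by
  obtain ⟨s, t, s', t', hs, ht, hs', ht', eH, eK, hd⟩ := hP
  obtain ⟨x1, x2, e⟩ := hrep
  by_contra hc
  have hK : (K : ℤ) = 0 := by exact_mod_cast (by omega : K = 0)
  have ex : (x : ℤ) = (t' * x1 + s' * x2) * H + (t * x1 + s * x2) * K := by
    rw [eH, eK, e]; linear_combination (-(x1 * A + x2 * B)) * hd
  rw [hK, mul_zero, add_zero] at ex
  have : H ∣ x := by
    have : (H : ℤ) ∣ x := ⟨_, by rw [mul_comm]; exact ex⟩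
    exact_mod_cast this
  have := Nat.le_of_dvd hx this
  omega

lemma core_a {A B : ℤ} {H K x : ℕ} (hP : PInv A B H K) (hx : 0 < x) (hH : x < H) (hK : K < x)
    (hK0 : 0 < K) (hq : ∀ q, 1 ≤ q → q ≤ H / K → x ≠ H - q * K) (x1 x2 : ℤ)
    (e : (x : ℤ) = x1 * A + x2 * B) (h1 : 0 < x1) (h2 : x2 ≤ 0) :
    ∃ d : ℕ, d ∈ Dset H K 1 ∧ d < x ∧ ∃ d1 d2 : ℤ, (d : ℤ) = d1 * A + d2 * B ∧
      0 < d1 ∧ d1 < x1 ∧ x2 < d2 ∧ d2 < 0 := by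
  obtain ⟨s, t, s', t', hs, ht, hs', ht', eH, eK, hd⟩ := hP
  obtain ⟨u, hu⟩ : ∃ u, u = t' * x1 + s' * x2 := ⟨_, rfl⟩
  obtain ⟨w, hw⟩ : ∃ w, w = -(t * x1 + s * x2) := ⟨_, rfl⟩
  have ex : (x : ℤ) = u * H - w * K := by
    rw [hu, hw, eH, eK, e]; linear_combination (-(x1 * A + x2 * B)) * hd
  have e1 : x1 = u * s + w * s' := by rw [hu, hw]; linear_combination (-x1) * hd
  have e2 : x2 = -(u * t + w * t') := by rw [hu, hw]; linear_combination (-x2) * hd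
  have hxz : (0:ℤ) < x := by exact_mod_cast hx
  have hHz : (x:ℤ) < H := by exact_mod_cast hH
  have hKz : (0:ℤ) < K := by exact_mod_cast hK0
  have w1 : 1 ≤ w := by
    by_contra hc
    have hc : w ≤ 0 := by omega
    have : 1 ≤ u := by
      by_contra hu'
      have : u ≤ 0 := by omega
      nlinarith
    nlinarith
  have u1 : 1 ≤ u := by
    by_contra hc
    have hc : u ≤ 0 := by omega
    nlinarith
  have u2 : 2 ≤ u := by
    by_contra hc
    have hc : u = 1 := by omega
    subst hc
    lift w to ℕ using by omega
    have : x + w * K = H := by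
      have : (x:ℤ) + w * K = H := by linarith
      exact_mod_cast this
    refine hq w (by omega) ?_ (by omega)
    rw [Nat.le_div_iff_mul_le hK0]; omega
  lift w to ℕ using by omega
  have key : ∃ q : ℕ, 1 ≤ q ∧ q ≤ H / K ∧ q ≤ w ∧ H - q * K < x := by
    rcases le_total w (H / K) with h | h
    · refine ⟨w, by omega, h, le_rfl, ?_⟩
      have : w * K ≤ H := (Nat.le_div_iff_mul_le hK0).1 h
      have : (H : ℤ) - w * K < x := by nlinarith
      have h3 : (H : ℤ) < x + w * K := by linarith
      have h4 : H < x + w * K := by exact_mod_cast h3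
      omega
    · refine ⟨H / K, Nat.div_pos (by omega) hK0, le_rfl, h, ?_⟩
      have a1 := Nat.mod_add_div H K
      have a2 := Nat.mod_lt H hK0
      rw [mul_comm] at a1
      omega
  obtain ⟨q, q1, q2, q3, q4⟩ := key
  have hle : q * K ≤ H := (Nat.le_div_iff_mul_le hK0).1 q2
  have q3z : (q : ℤ) ≤ w := by exact_mod_cast q3
  have q0z : (0 : ℤ) ≤ q := by positivity
  refine ⟨H - q * K, ⟨q, q1, q2, rfl⟩, q4, s + q * s', -(t + q * t'), ?_, by positivity, ?_, ?_, ?_⟩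
  · push_cast [hle]; rw [eH, eK]; ring
  · rw [e1]; nlinarith
  · rw [e2]; nlinarith
  · have : 0 < t + q * t' := by positivity
    linarith

lemma core_b {A B : ℤ} {H K x : ℕ} (hP : PInv A B H K) (hx : 0 < x) (hH : x < H) (hK : K < x)
    (hK0 : 0 < K) (x1 x2 : ℤ)
    (e : (x : ℤ) = x1 * A + x2 * B) (h1 : x1 ≤ 0) (h2 : 0 < x2) :
    ∃ d1 d2 : ℤ, (K : ℤ) = d1 * A + d2 * B ∧
      x1 < d1 ∧ d1 < 0 ∧ 0 < d2 ∧ d2 < x2 := by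
  obtain ⟨s, t, s', t', hs, ht, hs', ht', eH, eK, hd⟩ := hP
  obtain ⟨m, hm⟩ : ∃ m, m = -(t' * x1 + s' * x2) := ⟨_, rfl⟩
  obtain ⟨v, hv⟩ : ∃ v, v = (t * x1 + s * x2) := ⟨_, rfl⟩
  have ex : (x : ℤ) = v * K - m * H := by
    rw [hm, hv, eH, eK, e]; linear_combination (-(x1 * A + x2 * B)) * hd
  have e1 : x1 = -(m * s + v * s') := by rw [hm, hv]; linear_combination (-x1) * hd
  have e2 : x2 = m * t + v * t' := by rw [hm, hv]; linear_combination (-x2) * hd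
  have hxz : (0:ℤ) < x := by exact_mod_cast hx
  have hHz : (x:ℤ) < H := by exact_mod_cast hH
  have hKz : (0:ℤ) < K := by exact_mod_cast hK0
  have hKx : (K:ℤ) < x := by exact_mod_cast hK
  have m0 : 0 ≤ m := by
    by_contra hc
    have hc : m ≤ -1 := by omega
    have : 0 ≤ v := by
      by_contra hu'
      have : v ≤ 0 := by omega
      nlinarith
    nlinarith
  have v2 : 2 ≤ v := by
    by_contra hc
    have hc : v ≤ 1 := by omega
    nlinarith
  refine ⟨-s', t', by rw [eK]; ring, ?_, by linarith, ht', ?_⟩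
  · rw [e1]; nlinarith
  · rw [e2]; nlinarith

/-- General basement result: for a positive multiple `x` of `g` with `x < η3` and
`x ∉ Euc(δ1,δ2)`, lying between `η_(j+1)` and `η_j` for `j ≥ 3` (here 0-indexed `j ≥ 2`),
there are basements `d ∈ D(η_(j-1),η_j) ∪ D(η_j,η_(j+1))` below `x` whose `(η1,η2)`
representations are coordinatewise strictly smaller (in absolute value) than those of
`x`, both for the unprimed and for the primed representations. -/
theorem exists_basement_general (δ1 δ2 : ℕ) (h1 : 0 < δ1) (h2 : 0 < δ2)
    (h3pos : 0 < etaSeq (max δ1 δ2) (min δ1 δ2) 2)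
    (x : ℕ) (hxpos : 0 < x) (hdvd : Nat.gcd δ1 δ2 ∣ x)
    (hxlt : x < etaSeq (max δ1 δ2) (min δ1 δ2) 2) (hxnot : x ∉ Euc δ1 δ2)
    (j : ℕ) (hj : 2 ≤ j)
    (hxlo : etaSeq (max δ1 δ2) (min δ1 δ2) (j + 1) ≤ x) (hxhi : x ≤ etaSeq (max δ1 δ2) (min δ1 δ2) j) :
    ((∀ x1 x2 : ℤ, ((x : ℤ) = x1 * (max δ1 δ2) + x2 * (min δ1 δ2) ∧
        0 < x1 ∧ x1 ≤ ((min δ1 δ2 / Nat.gcd δ1 δ2 : ℕ) : ℤ) ∧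
        -((max δ1 δ2 / Nat.gcd δ1 δ2 : ℕ) : ℤ) < x2 ∧ x2 ≤ 0) →
      ∃ d : ℕ, (d ∈ Dset (etaSeq (max δ1 δ2) (min δ1 δ2) (j - 1)) (etaSeq (max δ1 δ2) (min δ1 δ2) j) (if j - 1 ≤ 1 then 0 else 1) ∪
          Dset (etaSeq (max δ1 δ2) (min δ1 δ2) j) (etaSeq (max δ1 δ2) (min δ1 δ2) (j + 1)) 1) ∧ d < x ∧
        ∃ d1 d2 : ℤ, (d : ℤ) = d1 * (max δ1 δ2) + d2 * (min δ1 δ2) ∧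
          0 < d1 ∧ d1 < x1 ∧ x2 < d2 ∧ d2 < 0)) ∧
    ((∀ x1' x2' : ℤ, ((x : ℤ) = x1' * (max δ1 δ2) + x2' * (min δ1 δ2) ∧
        -((min δ1 δ2 / Nat.gcd δ1 δ2 : ℕ) : ℤ) < x1' ∧ x1' ≤ 0 ∧
        0 < x2' ∧ x2' ≤ ((max δ1 δ2 / Nat.gcd δ1 δ2 : ℕ) : ℤ)) →
      ∃ d : ℕ, (d ∈ Dset (etaSeq (max δ1 δ2) (min δ1 δ2) (j - 1)) (etaSeq (max δ1 δ2) (min δ1 δ2) j) (if j - 1 ≤ 1 then 0 else 1) ∪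
          Dset (etaSeq (max δ1 δ2) (min δ1 δ2) j) (etaSeq (max δ1 δ2) (min δ1 δ2) (j + 1)) 1) ∧ d < x ∧
        ∃ d1' d2' : ℤ, (d : ℤ) = d1' * (max δ1 δ2) + d2' * (min δ1 δ2) ∧
          x1' < d1' ∧ d1' < 0 ∧ 0 < d2' ∧ d2' < x2')) := by
  have hb : 0 < min δ1 δ2 := lt_min h1 h2
  have hab : min δ1 δ2 ≤ max δ1 δ2 := min_le_max
  have e1 : etaSeq (max δ1 δ2) (min δ1 δ2) 1 = min δ1 δ2 := by rw [etaSeq]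
  have hmem := eta_mem δ1 δ2 (by rw [e1]; exact hb) h3pos
  obtain ⟨k, rfl⟩ := Nat.exists_eq_add_of_le' hj
  have hinv := eta_inv _ _ hb hab h3pos k
  have hH : x < etaSeq (max δ1 δ2) (min δ1 δ2) (k + 2) := by
    refine lt_of_le_of_ne hxhi fun h => hxnot ?_
    rw [h]; exact hmem _ (by omega)
  have hK : etaSeq (max δ1 δ2) (min δ1 δ2) (k + 2 + 1) < x := by
    refine lt_of_le_of_ne hxlo fun h => hxnot ?_
    rw [← h]; exact hmem _ (by omega)
  have hq : 0 < etaSeq (max δ1 δ2) (min δ1 δ2) (k + 2 + 1) → ∀ q, 1 ≤ q →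
      q ≤ etaSeq (max δ1 δ2) (min δ1 δ2) (k + 2) / etaSeq (max δ1 δ2) (min δ1 δ2) (k + 2 + 1) →
      x ≠ etaSeq (max δ1 δ2) (min δ1 δ2) (k + 2) - q * etaSeq (max δ1 δ2) (min δ1 δ2) (k + 2 + 1) := by
    intro h0 q q1 q2 he
    exact hxnot ⟨k + 2, h0, q, by split_ifs <;> omega, q2, he⟩
  have hD : 0 < etaSeq (max δ1 δ2) (min δ1 δ2) (k + 2 + 1) →
      etaSeq (max δ1 δ2) (min δ1 δ2) (k + 2 + 1) ∈ Dset (etaSeq (max δ1 δ2) (min δ1 δ2) (k + 2 - 1))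
        (etaSeq (max δ1 δ2) (min δ1 δ2) (k + 2)) (if k + 2 - 1 ≤ 1 then 0 else 1) := by
    intro h0
    refine dset_top _ _ (k+1) _ ?_
    split_ifs
    · exact Nat.zero_le _
    · exact dset_top' _ _ (k+1) (lt_of_le_of_lt (Nat.zero_le _) hH) h0 (by omega)
  refine ⟨?_, ?_⟩
  · rintro x1 x2 ⟨e, hx1, -, -, hx2⟩
    rcases hinv with hP | hP
    · have h0 := core_pre hP hxpos hH ⟨_, _, e⟩
      obtain ⟨d, hd, hr⟩ := core_a hP hxpos hH hK h0 (hq h0) x1 x2 e hx1 hx2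
      exact ⟨d, Or.inr hd, hr⟩
    · rw [add_comm] at e
      have h0 := core_pre hP hxpos hH ⟨_, _, e⟩
      obtain ⟨d2, d1, f, f1, f2, f3, f4⟩ := core_b hP hxpos hH hK h0 x2 x1 e hx2 hx1
      exact ⟨_, Or.inl (hD h0), hK, d1, d2, by rw [f, add_comm], f3, f4, f1, f2⟩
  · rintro x1 x2 ⟨e, -, hx1, hx2, -⟩
    rcases hinv with hP | hP
    · have h0 := core_pre hP hxpos hH ⟨_, _, e⟩
      exact ⟨_, Or.inl (hD h0), hK, core_b hP hxpos hH hK h0 x1 x2 e hx1 hx2⟩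
    · rw [add_comm] at e
      have h0 := core_pre hP hxpos hH ⟨_, _, e⟩
      obtain ⟨d, hd, hl, d2, d1, f, f1, f2, f3, f4⟩ :=
        core_a hP hxpos hH hK h0 (hq h0) x2 x1 e hx2 hx1
      exact ⟨d, Or.inr hd, hl, d1, d2, by rw [f, add_comm], f3, f4, f1, f2⟩
end

section
/- Let s1 > s2 > s3 ≥ 2 be pairwise coprime positive integers and let S be the numerical semigroup generated by n1 = s2*s3, n2 = s1*s3, n3 = s1*s2. Then the maximum of Δ(S) equals max{s1 − s2, s2 − s3}; that is, max{s1 − s2, s2 − s3} ∈ Δ(S) and every element of Δ(S) is at most max{s1 − s2, s2 − s3}. -/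
theorem dvd_aux (a b c x y w : ℤ) (h : x * (b * c) = a * w) (hab : IsCoprime a b)
    (hac : IsCoprime a c) : a ∣ x :=
  (IsCoprime.mul_right hab hac).dvd_of_dvd_mul_right ⟨w, h⟩

theorem Lset_betti (s1 s2 s3 : ℕ) (h3 : 2 ≤ s3) (h32 : s3 < s2) (h21 : s2 < s1)
    (c12 : Nat.Coprime s1 s2) (c13 : Nat.Coprime s1 s3) (c23 : Nat.Coprime s2 s3) (t : ℕ)
    (ht : t ∈ Lset (s2 * s3) (s1 * s3) (s1 * s2) (s1 * s2 * s3)) : t = s1 ∨ t = s2 ∨ t = s3 := by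
  obtain ⟨⟨x, y, z⟩, hz, rfl⟩ := ht
  simp only [Zset, Set.mem_setOf_eq] at hz
  simp only [len]
  have i12 := Nat.isCoprime_iff_coprime.mpr c12
  have i13 := Nat.isCoprime_iff_coprime.mpr c13
  have i23 := Nat.isCoprime_iff_coprime.mpr c23
  have hzZ : (x:ℤ) * (s2 * s3) + y * (s1 * s3) + z * (s1 * s2) = s1 * s2 * s3 := by
    exact_mod_cast hz
  have d1 : (s1:ℤ) ∣ x := dvd_aux s1 s2 s3 x 0 (s2 * s3 - y * s3 - z * s2) (by linarith) i12 i13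
  have d2 : (s2:ℤ) ∣ y :=
    dvd_aux s2 s1 s3 y 0 (s1 * s3 - x * s3 - z * s1) (by linarith) i12.symm i23
  have d3 : (s3:ℤ) ∣ z :=
    dvd_aux s3 s1 s2 z 0 (s1 * s2 - x * s2 - y * s1) (by linarith) i13.symm i23.symm
  obtain ⟨a, rfl⟩ := Int.natCast_dvd_natCast.mp d1
  obtain ⟨b, rfl⟩ := Int.natCast_dvd_natCast.mp d2
  obtain ⟨c, rfl⟩ := Int.natCast_dvd_natCast.mp d3
  have hp : 0 < s1 * s2 * s3 := by
    have : 0 < s1 := by omega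
    have : 0 < s2 := by omega
    have : 0 < s3 := by omega
    positivity
  have hs : a + b + c = 1 := by
    apply Nat.eq_of_mul_eq_mul_left hp
    linarith
  have : (a = 1 ∧ b = 0 ∧ c = 0) ∨ (a = 0 ∧ b = 1 ∧ c = 0) ∨ (a = 0 ∧ b = 0 ∧ c = 1) := by omega
  rcases this with ⟨rfl, rfl, rfl⟩ | ⟨rfl, rfl, rfl⟩ | ⟨rfl, rfl, rfl⟩ <;> simp

theorem nonneg_aux (s z w : ℕ) (b : ℤ) (hz : z < s) (h : (w:ℤ) - z = s * b) : 0 ≤ b := by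
  by_contra hb
  have : b ≤ -1 := by omega
  nlinarith

theorem max_aux (s1 s2 s3 : ℕ) (h3 : 2 ≤ s3) (h32 : s3 < s2) (h21 : s2 < s1)
    (c12 : Nat.Coprime s1 s2) (c13 : Nat.Coprime s1 s3) (c23 : Nat.Coprime s2 s3)
    (x y z x' y' z' : ℕ) (hy : y < s2) (hz : z < s3)
    (h : x * (s2 * s3) + y * (s1 * s3) + z * (s1 * s2)
      = x' * (s2 * s3) + y' * (s1 * s3) + z' * (s1 * s2)) : x' + y' + z' ≤ x + y + z := by
  have i12 := Nat.isCoprime_iff_coprime.mpr c12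
  have i13 := Nat.isCoprime_iff_coprime.mpr c13
  have i23 := Nat.isCoprime_iff_coprime.mpr c23
  have hZ : (x:ℤ) * (s2 * s3) + y * (s1 * s3) + z * (s1 * s2)
      = x' * (s2 * s3) + y' * (s1 * s3) + z' * (s1 * s2) := by
    exact_mod_cast h
  obtain ⟨b, hb⟩ : (s2:ℤ) ∣ (y' - y : ℤ) :=
    dvd_aux s2 s1 s3 _ 0 ((x - x') * s3 + (z - z') * s1) (by linarith) i12.symm i23
  obtain ⟨c, hc⟩ : (s3:ℤ) ∣ (z' - z : ℤ) :=
    dvd_aux s3 s1 s2 _ 0 ((x - x') * s2 + (y - y') * s1) (by linarith) i13.symm i23.symm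
  have b0 := nonneg_aux _ _ _ _ hy hb
  have c0 := nonneg_aux _ _ _ _ hz hc
  have hp : (0:ℤ) < s2 * s3 := by
    have : 0 < s2 := by omega
    have : 0 < s3 := by omega
    positivity
  have hx : (x:ℤ) - x' = s1 * (b + c) := by
    apply mul_left_cancel₀ hp.ne'
    linear_combination hZ + s1 * s3 * hb + s1 * s2 * hc
  have e1 : (s2:ℤ) * b ≤ s1 * b := by
    apply mul_le_mul_of_nonneg_right _ b0
    exact_mod_cast h21.le
  have e2 : (s3:ℤ) * c ≤ s1 * c := by
    apply mul_le_mul_of_nonneg_right _ c0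
    exact_mod_cast (h32.trans h21).le
  have : (x':ℤ) + y' + z' ≤ x + y + z := by linarith
  exact_mod_cast this

/-- The maximum of the Delta set of `⟨s2*s3, s1*s3, s1*s2⟩` is `max(s1-s2, s2-s3)`. -/
theorem max_delta_one_betti (s1 s2 s3 : ℕ) (h3 : 2 ≤ s3) (h32 : s3 < s2) (h21 : s2 < s1)
    (c12 : Nat.Coprime s1 s2) (c13 : Nat.Coprime s1 s3) (c23 : Nat.Coprime s2 s3) :
    max (s1 - s2) (s2 - s3) ∈ DeltaS (s2 * s3) (s1 * s3) (s1 * s2) ∧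
    ∀ d ∈ DeltaS (s2 * s3) (s1 * s3) (s1 * s2), d ≤ max (s1 - s2) (s2 - s3) := by
  have m1 : s1 ∈ Lset (s2 * s3) (s1 * s3) (s1 * s2) (s1 * s2 * s3) :=
    ⟨(s1, 0, 0), by simp only [Zset, Set.mem_setOf_eq]; ring, by simp [len]⟩
  have m2 : s2 ∈ Lset (s2 * s3) (s1 * s3) (s1 * s2) (s1 * s2 * s3) :=
    ⟨(0, s2, 0), by simp only [Zset, Set.mem_setOf_eq]; ring, by simp [len]⟩
  have m3 : s3 ∈ Lset (s2 * s3) (s1 * s3) (s1 * s2) (s1 * s2 * s3) :=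
    ⟨(0, 0, s3), by simp only [Zset, Set.mem_setOf_eq]; ring, by simp [len]⟩
  refine ⟨⟨s1 * s2 * s3, ⟨s1, 0, 0, by ring⟩, ?_⟩, ?_⟩
  · rcases le_total (s1 - s2) (s2 - s3) with hle | hle
    · rw [max_eq_right hle]
      refine ⟨s2, s3, m2, m3, h32, rfl, fun t ht => ?_⟩
      have := Lset_betti s1 s2 s3 h3 h32 h21 c12 c13 c23 t ht
      omega
    · rw [max_eq_left hle]
      refine ⟨s1, s2, m1, m2, h21, rfl, fun t ht => ?_⟩
      have := Lset_betti s1 s2 s3 h3 h32 h21 c12 c13 c23 t ht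
      omega
  · rintro d ⟨s, -, l, l', ⟨⟨x', y', z'⟩, hz', rfl⟩, ⟨⟨x, y, z⟩, hz, rfl⟩, hlt, rfl, hno⟩
    simp only [Zset, Set.mem_setOf_eq] at hz hz'
    simp only [len] at hlt hno ⊢
    by_cases hy : y < s2
    · by_cases hzz : z < s3
      · have := max_aux s1 s2 s3 h3 h32 h21 c12 c13 c23 x y z x' y' z' hy hzz (hz.trans hz'.symm)
        omega
      · obtain ⟨c, rfl⟩ := Nat.exists_eq_add_of_le (not_lt.mp hzz)
        have := hno (x + (y + s2) + c) ⟨(x, y + s2, c), by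
          simp only [Zset, Set.mem_setOf_eq]; rw [← hz]; ring, rfl⟩
        omega
    · obtain ⟨c, rfl⟩ := Nat.exists_eq_add_of_le (not_lt.mp hy)
      have := hno (x + s1 + c + z) ⟨(x + s1, c, z), by
        simp only [Zset, Set.mem_setOf_eq]; rw [← hz]; ring, rfl⟩
      omega
end

section
/- Let s1 > s2 > s3 ≥ 2 be pairwise coprime positive integers and let S be the numerical semigroup generated by n1 = s2*s3, n2 = s1*s3, n3 = s1*s2. Then the minimum of Δ(S) equals gcd(s1 − s2, s2 − s3); that is, gcd(s1 − s2, s2 − s3) ∈ Δ(S) and every element of Δ(S) is at least gcd(s1 − s2, s2 − s3). -/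
lemma len_aux (s1 s2 s3 : ℕ) (h32 : s3 < s2) (h21 : s2 < s1) (c23 : Nat.Coprime s2 s3)
    (s l l' : ℕ) (hl : l ∈ Lset (s2 * s3) (s1 * s3) (s1 * s2) s)
    (hl' : l' ∈ Lset (s2 * s3) (s1 * s3) (s1 * s2) s) :
    ((Nat.gcd (s1 - s2) (s2 - s3) : ℕ) : ℤ) ∣ (l : ℤ) - l' := by
  obtain ⟨⟨a, b, c⟩, hz, rfl⟩ := hl
  obtain ⟨⟨a', b', c'⟩, hz', rfl⟩ := hl'
  simp only [Zset, Set.mem_setOf_eq] at hz hz'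
  obtain ⟨u, hu⟩ := Nat.gcd_dvd_left (s1 - s2) (s2 - s3)
  obtain ⟨v, hv⟩ := Nat.gcd_dvd_right (s1 - s2) (s2 - s3)
  generalize Nat.gcd (s1 - s2) (s2 - s3) = g at *
  have e2 : s2 = s3 + g * v := by omega
  have e1 : s1 = s3 + g * v + g * u := by omega
  have cg : Nat.Coprime g s3 := by
    rw [e2] at c23
    have hd1 := Nat.gcd_dvd_left g s3
    have hd2 := Nat.gcd_dvd_right g s3
    have : Nat.gcd g s3 ∣ Nat.gcd (s3 + g * v) s3 :=
      Nat.dvd_gcd (Nat.dvd_add hd2 (Dvd.dvd.mul_right hd1 v)) hd2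
    rw [c23] at this
    exact Nat.dvd_one.mp this
  have ci : IsCoprime (g : ℤ) ((s3 : ℤ) ^ 2) := (Nat.isCoprime_iff_coprime.mpr cg).pow_right
  refine ci.dvd_of_dvd_mul_left ?_
  have h := hz.trans hz'.symm
  subst e2
  subst e1
  zify at h
  simp only [len]
  push_cast
  refine ⟨-((a - a' : ℤ) * v * s3 + (b - b') * (v + u) * s3
    + (c - c') * ((v + u) * s3 + v * s3 + g * v * (v + u))), ?_⟩
  linear_combination h

/-- The minimum of the Delta set of `⟨s2*s3, s1*s3, s1*s2⟩` is `gcd(s1-s2, s2-s3)`. -/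
theorem min_delta_one_betti (s1 s2 s3 : ℕ) (h3 : 2 ≤ s3) (h32 : s3 < s2) (h21 : s2 < s1)
    (c12 : Nat.Coprime s1 s2) (c13 : Nat.Coprime s1 s3) (c23 : Nat.Coprime s2 s3) :
    Nat.gcd (s1 - s2) (s2 - s3) ∈ DeltaS (s2 * s3) (s1 * s3) (s1 * s2) ∧
    ∀ d ∈ DeltaS (s2 * s3) (s1 * s3) (s1 * s2), Nat.gcd (s1 - s2) (s2 - s3) ≤ d := by
  have hg : 0 < Nat.gcd (s1 - s2) (s2 - s3) := Nat.gcd_pos_of_pos_left _ (by omega)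
  have key := len_aux s1 s2 s3 h32 h21 c23
  have bez := Nat.gcd_eq_gcd_ab (s1 - s2) (s2 - s3)
  generalize Nat.gcdA (s1 - s2) (s2 - s3) = a at bez
  generalize Nat.gcdB (s1 - s2) (s2 - s3) = b at bez
  generalize Nat.gcd (s1 - s2) (s2 - s3) = g at *
  rw [Nat.cast_sub h21.le, Nat.cast_sub h32.le] at bez
  constructor
  · obtain ⟨K, hK⟩ : ∃ K : ℕ, K = a.natAbs + b.natAbs := ⟨_, rfl⟩
    obtain ⟨p, hp⟩ := Int.eq_ofNat_of_zero_le (a := K + a) (by omega)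
    obtain ⟨q, hq⟩ := Int.eq_ofNat_of_zero_le (a := K + b - a) (by omega)
    obtain ⟨r, hr⟩ := Int.eq_ofNat_of_zero_le (a := K - b) (by omega)
    have m0 : K * (s1 + s2 + s3) ∈ Lset (s2 * s3) (s1 * s3) (s1 * s2) (3 * K * (s1 * s2 * s3)) := by
      refine ⟨(K * s1, K * s2, K * s3), ?_, ?_⟩
      · simp only [Zset, Set.mem_setOf_eq]; ring
      · simp only [len]; ring
    have m1 : K * (s1 + s2 + s3) + g ∈
        Lset (s2 * s3) (s1 * s3) (s1 * s2) (3 * K * (s1 * s2 * s3)) := by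
      refine ⟨(p * s1, q * s2, r * s3), ?_, ?_⟩
      · simp only [Zset, Set.mem_setOf_eq]; zify; rw [← hp, ← hq, ← hr]; ring
      · simp only [len]; zify; rw [← hp, ← hq, ← hr, bez]; ring
    refine ⟨3 * K * (s1 * s2 * s3), ⟨K * s1, K * s2, K * s3, by ring⟩, _, _, m1, m0, by omega,
      by omega, ?_⟩
    rintro t ht ⟨h1, h2⟩
    have := Int.le_of_dvd (by omega) (key _ _ _ ht m0)
    omega
  · rintro d ⟨s, -, l, l', hl, hl', hlt, rfl, -⟩
    have := Int.le_of_dvd (by omega) (key _ _ _ hl hl')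
    omega
end

section
/- Let a ≥ 2 be an integer, let m1 < m2 be coprime positive integers, and let b, c ∈ ℕ with b + c ≥ 2 and gcd(a, b*m1 + c*m2) = 1, such that n1 = a*m1, n2 = a*m2, n3 = b*m1 + c*m2 is a minimal generating system of the numerical semigroup S generated by {n1,n2,n3}. Choose an integer λ with −⌊b/m2⌋ ≤ λ ≤ ⌊c/m1⌋ minimizing |b + c + λ*(m2 − m1) − a| over this range, and set δ1 = m2 − m1, δ2 = |b + c + λ*(m2 − m1) − a|. Then the minimum of Δ(S) equals gcd(δ1, δ2) (with the convention gcd(δ1, 0) = δ1); that is, gcd(δ1, δ2) ∈ Δ(S) and every element of Δ(S) is at least gcd(δ1, δ2). -/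
/-- `s` belongs to the numerical semigroup generated by `a` and `b`. -/
def genBy2 (a b s : ℕ) : Prop := ∃ x y : ℕ, x * a + y * b = s

/-- `{n1, n2, n3}` is a minimal generating system: none of the generators lies in the
semigroup generated by the other two. -/
def MinimalGen3 (n1 n2 n3 : ℕ) : Prop :=
  ¬ genBy2 n2 n3 n1 ∧ ¬ genBy2 n1 n3 n2 ∧ ¬ genBy2 n1 n2 n3

/-- Lengths of two factorizations differ by a multiple of the gcd. -/
theorem aux_dvd (a m1 m2 b c x y z g : ℤ) (ha : a ≠ 0) (hm2 : m2 ≠ 0)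
    (hcop : IsCoprime m1 m2) (hg : IsCoprime a (b * m1 + c * m2))
    (h1 : g ∣ m2 - m1) (h2 : g ∣ b + c - a)
    (h : x * (a * m1) + y * (a * m2) + z * (b * m1 + c * m2) = 0) : g ∣ x + y + z := by
  have h3 : a ∣ z := by
    apply hg.dvd_of_dvd_mul_right
    exact ⟨-(x * m1 + y * m2), by linear_combination h⟩
  obtain ⟨k, rfl⟩ := h3
  have h4 : (x + k * b) * m1 + (y + k * c) * m2 = 0 := by
    apply mul_left_cancel₀ ha
    linear_combination h
  have h5 : m2 ∣ x + k * b := by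
    apply hcop.symm.dvd_of_dvd_mul_right
    exact ⟨-(y + k * c), by linear_combination h4⟩
  obtain ⟨t, ht⟩ := h5
  have h6 : y + k * c = - (m1 * t) := by
    apply mul_left_cancel₀ hm2
    rw [ht] at h4
    linear_combination h4
  have : x + y + a * k = t * (m2 - m1) - k * (b + c - a) := by
    linear_combination ht + h6
  rw [this]
  exact dvd_sub (h1.mul_left _) (h2.mul_left _)

/-- The minimum of the Delta set of `⟨a*m1, a*m2, b*m1+c*m2⟩` is `gcd(δ1, δ2)`. -/
theorem min_delta_two_betti (a m1 m2 b c : ℕ) (ha : 2 ≤ a) (hm1 : 0 < m1) (hm : m1 < m2)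
    (hcop : Nat.Coprime m1 m2) (hbc : 2 ≤ b + c)
    (hg : Nat.gcd a (b * m1 + c * m2) = 1)
    (hmin : MinimalGen3 (a * m1) (a * m2) (b * m1 + c * m2))
    (lam : ℤ) (hlo : -((b / m2 : ℕ) : ℤ) ≤ lam) (hhi : lam ≤ ((c / m1 : ℕ) : ℤ))
    (hbest : ∀ mu : ℤ, -((b / m2 : ℕ) : ℤ) ≤ mu → mu ≤ ((c / m1 : ℕ) : ℤ) →
      |(b : ℤ) + c + lam * ((m2 : ℤ) - m1) - a| ≤ |(b : ℤ) + c + mu * ((m2 : ℤ) - m1) - a|) :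
    Nat.gcd (m2 - m1) (((b : ℤ) + c + lam * ((m2 : ℤ) - m1) - a).natAbs) ∈ DeltaS (a * m1) (a * m2) (b * m1 + c * m2) ∧
    ∀ d ∈ DeltaS (a * m1) (a * m2) (b * m1 + c * m2),
      Nat.gcd (m2 - m1) (((b : ℤ) + c + lam * ((m2 : ℤ) - m1) - a).natAbs) ≤ d := by
  have e : ((m2 - m1 : ℕ) : ℤ) = (m2 : ℤ) - m1 := by push_cast [hm.le]; ring
  set D : ℤ := (b : ℤ) + c + lam * ((m2 : ℤ) - m1) - a with hD
  set g := Nat.gcd (m2 - m1) D.natAbs with hgdef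
  have hgi : (g : ℤ) = Int.gcd ((m2 - m1 : ℕ) : ℤ) D := by
    simp [hgdef, Int.gcd]
  have hgpos : 0 < g := Nat.gcd_pos_of_pos_left _ (by omega)
  have h1 : (g : ℤ) ∣ (m2 : ℤ) - m1 := by rw [← e, hgi]; exact Int.gcd_dvd_left _ _
  have h2 : (g : ℤ) ∣ (b : ℤ) + c - a := by
    have h3 : (g : ℤ) ∣ D := by rw [hgi]; exact Int.gcd_dvd_right _ _
    have : (b : ℤ) + c - a = D - lam * ((m2 : ℤ) - m1) := by rw [hD]; ring
    rw [this]
    exact dvd_sub h3 (h1.mul_left _)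
  have key : ∀ s l l' : ℕ, l ∈ Lset (a * m1) (a * m2) (b * m1 + c * m2) s →
      l' ∈ Lset (a * m1) (a * m2) (b * m1 + c * m2) s → (g : ℤ) ∣ (l : ℤ) - l' := by
    rintro s l l' ⟨⟨x, y, z⟩, hz, rfl⟩ ⟨⟨x', y', z'⟩, hz', rfl⟩
    simp only [Zset, Set.mem_setOf_eq] at hz hz'
    have := aux_dvd a m1 m2 b c (x - x') (y - y') (z - z') g (by omega) (by omega)
      (Nat.isCoprime_iff_coprime.2 hcop)
      (by exact_mod_cast Nat.isCoprime_iff_coprime.2 hg) h1 h2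
      (by
        have hz1 : ((x * (a * m1) + y * (a * m2) + z * (b * m1 + c * m2) : ℕ) : ℤ) = s := by
          rw [hz]
        have hz2 : ((x' * (a * m1) + y' * (a * m2) + z' * (b * m1 + c * m2) : ℕ) : ℤ) = s := by
          rw [hz']
        push_cast at hz1 hz2
        linear_combination hz1 - hz2)
    simp only [len]
    push_cast
    convert this using 1
    ring
  constructor
  · obtain ⟨u, v, huv⟩ : ∃ u v : ℤ, (g : ℤ) = ((m2 : ℤ) - m1) * u + D * v :=
      ⟨_, _, by rw [hgi, Int.gcd_eq_gcd_ab, e]⟩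
    obtain ⟨t, ht⟩ : ∃ t : ℤ, t = u + v * lam := ⟨_, rfl⟩
    obtain ⟨X, hX⟩ : ∃ X : ℤ, X = m2 * t + v * b := ⟨_, rfl⟩
    obtain ⟨Y, hY⟩ : ∃ Y : ℤ, Y = - m1 * t + v * c := ⟨_, rfl⟩
    obtain ⟨Z, hZ⟩ : ∃ Z : ℤ, Z = - a * v := ⟨_, rfl⟩
    have hsum : X + Y + Z = g := by
      rw [huv, hX, hY, hZ, ht, hD]; ring
    have hker : X * (a * m1) + Y * (a * m2) + Z * (b * m1 + c * m2) = 0 := by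
      rw [hX, hY, hZ]; ring
    have hx := Int.toNat_sub_toNat_neg X
    have hy := Int.toNat_sub_toNat_neg Y
    have hz := Int.toNat_sub_toNat_neg Z
    generalize X.toNat = x at hx
    generalize (-X).toNat = x' at hx
    generalize Y.toNat = y at hy
    generalize (-Y).toNat = y' at hy
    generalize Z.toNat = z at hz
    generalize (-Z).toNat = z' at hz
    have hl : x + y + z = x' + y' + z' + g := by omega
    have hs : x' * (a * m1) + y' * (a * m2) + z' * (b * m1 + c * m2)
        = x * (a * m1) + y * (a * m2) + z * (b * m1 + c * m2) := by
      rw [← hx, ← hy, ← hz] at hker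
      zify
      linear_combination -hker
    have m1' : x + y + z ∈ Lset (a * m1) (a * m2) (b * m1 + c * m2)
        (x * (a * m1) + y * (a * m2) + z * (b * m1 + c * m2)) := ⟨(x, y, z), rfl, rfl⟩
    have m2' : x' + y' + z' ∈ Lset (a * m1) (a * m2) (b * m1 + c * m2)
        (x * (a * m1) + y * (a * m2) + z * (b * m1 + c * m2)) := ⟨(x', y', z'), hs, rfl⟩
    refine ⟨_, ⟨x, y, z, rfl⟩, x + y + z, x' + y' + z', m1', m2', by omega, by omega, ?_⟩
    rintro r hr ⟨hr1, hr2⟩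
    have := Int.le_of_dvd (by omega) (key _ _ _ hr m2')
    omega
  · rintro d ⟨s, -, l, l', hl, hl', hlt, rfl, -⟩
    have := Int.le_of_dvd (by omega) (key _ _ _ hl hl')
    omega
end

section
/- Let s1 > s2 > s3 ≥ 2 be pairwise coprime positive integers. Then the set of factorizations of s1*s2*s3 with respect to the generators n1 = s2*s3, n2 = s1*s3, n3 = s1*s2, namely {(z1,z2,z3) ∈ ℕ^3 : z1*s2*s3 + z2*s1*s3 + z3*s1*s2 = s1*s2*s3}, equals {(s1,0,0), (0,s2,0), (0,0,s3)}. -/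
lemma aux_dvd_of_eq (s k a m n : ℕ) (hc : Nat.Coprime s k) (h : a * k + s * m = s * n) : s ∣ a := by
  have h1 : s ∣ a * k := (Nat.dvd_add_left (Dvd.intro m rfl)).mp (h ▸ Dvd.intro n rfl)
  exact hc.dvd_of_dvd_mul_right h1

/-- The factorizations of the Betti element `s1*s2*s3` of `⟨s2*s3, s1*s3, s1*s2⟩` are
exactly `(s1,0,0)`, `(0,s2,0)` and `(0,0,s3)`. -/
theorem factorizations_of_betti_one (s1 s2 s3 : ℕ) (h3 : 2 ≤ s3) (h32 : s3 < s2) (h21 : s2 < s1)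
    (c12 : Nat.Coprime s1 s2) (c13 : Nat.Coprime s1 s3) (c23 : Nat.Coprime s2 s3) :
    {z : ℕ × ℕ × ℕ | z.1 * (s2 * s3) + z.2.1 * (s1 * s3) + z.2.2 * (s1 * s2) =
        s1 * s2 * s3} =
      {((s1, 0, 0) : ℕ × ℕ × ℕ), (0, s2, 0), (0, 0, s3)} := by
  ext ⟨a, b, c⟩
  simp only [Set.mem_setOf_eq, Set.mem_insert_iff, Set.mem_singleton_iff, Prod.mk.injEq]
  constructor
  · intro h
    obtain ⟨x, rfl⟩ := aux_dvd_of_eq s1 (s2 * s3) a (b * s3 + c * s2) (s2 * s3)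
      (c12.mul_right c13) (by linarith)
    obtain ⟨y, rfl⟩ := aux_dvd_of_eq s2 (s1 * s3) b (s1 * x * s3 + c * s1) (s1 * s3)
      (c12.symm.mul_right c23) (by linarith)
    obtain ⟨w, rfl⟩ := aux_dvd_of_eq s3 (s1 * s2) c (s1 * x * s2 + s2 * y * s1) (s1 * s2)
      (c13.symm.mul_right c23.symm) (by linarith)
    have hp : 0 < s1 * s2 * s3 := by
      have : 0 < s1 := by omega
      have : 0 < s2 := by omega
      positivity
    have hs : x + y + w = 1 := Nat.eq_of_mul_eq_mul_left hp (by linarith)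
    have : (x = 1 ∧ y = 0 ∧ w = 0) ∨ (x = 0 ∧ y = 1 ∧ w = 0) ∨ (x = 0 ∧ y = 0 ∧ w = 1) := by omega
    rcases this with ⟨rfl, rfl, rfl⟩ | ⟨rfl, rfl, rfl⟩ | ⟨rfl, rfl, rfl⟩ <;> simp
  · rintro (⟨rfl, rfl, rfl⟩ | ⟨rfl, rfl, rfl⟩ | ⟨rfl, rfl, rfl⟩) <;> ring
end

section
/- Let s1, s2, s3 be pairwise coprime positive integers. Then {(v1,v2,v3) ∈ ℤ^3 : v1*s2*s3 + v2*s1*s3 + v3*s1*s2 = 0} = {λ*(s1,−s2,0) + μ*(0,s2,−s3) : λ, μ ∈ ℤ}; that is, the group of integer solutions of the homogeneous equation s2*s3*x + s1*s3*y + s1*s2*z = 0 is generated by the vectors (s1,−s2,0) and (0,s2,−s3). -/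
/-- The group of integer solutions of `s2*s3*x + s1*s3*y + s1*s2*z = 0` is generated by
`(s1, -s2, 0)` and `(0, s2, -s3)`. -/
theorem kernel_lattice_generated (s1 s2 s3 : ℕ) (h1 : 0 < s1) (h2 : 0 < s2) (h3 : 0 < s3)
    (c12 : Nat.Coprime s1 s2) (c13 : Nat.Coprime s1 s3) (c23 : Nat.Coprime s2 s3) :
    {v : ℤ × ℤ × ℤ | v.1 * (s2 * s3) + v.2.1 * (s1 * s3) + v.2.2 * (s1 * s2) = 0} =
      {v : ℤ × ℤ × ℤ | ∃ lam mu : ℤ,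
        v = lam • (((s1 : ℤ), -(s2 : ℤ), (0 : ℤ)) : ℤ × ℤ × ℤ) +
            mu • ((((0 : ℤ)), (s2 : ℤ), -(s3 : ℤ)) : ℤ × ℤ × ℤ)} := by
  have d12 : IsCoprime (s1 : ℤ) (s2 : ℤ) := Nat.isCoprime_iff_coprime.mpr c12
  have d13 : IsCoprime (s1 : ℤ) (s3 : ℤ) := Nat.isCoprime_iff_coprime.mpr c13
  have d23 : IsCoprime (s2 : ℤ) (s3 : ℤ) := Nat.isCoprime_iff_coprime.mpr c23
  have p1 : (s1 : ℤ) ≠ 0 := by exact_mod_cast h1.ne'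
  have p3 : (s3 : ℤ) ≠ 0 := by exact_mod_cast h3.ne'
  ext ⟨x, y, z⟩
  simp only [Set.mem_setOf_eq, Prod.smul_mk, Prod.mk_add_mk, Prod.mk.injEq, smul_eq_mul]
  constructor
  · intro h
    have hx : (s1 : ℤ) ∣ x :=
      (d12.mul_right d13).dvd_of_dvd_mul_right ⟨-(y * s3 + z * s2), by linear_combination h⟩
    have hz : (s3 : ℤ) ∣ z :=
      (d13.symm.mul_right d23.symm).dvd_of_dvd_mul_right
        ⟨-(x * s2 + y * s1), by linear_combination h⟩
    obtain ⟨a, rfl⟩ := hx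
    obtain ⟨c, rfl⟩ := hz
    refine ⟨a, -c, by ring, ?_, by ring⟩
    apply mul_right_cancel₀ (mul_ne_zero p1 p3)
    linear_combination h
  · rintro ⟨a, b, rfl, rfl, rfl⟩
    ring
end

section
/- Let a ≥ 2 be an integer, let m1 < m2 be coprime positive integers, and let b, c ∈ ℕ with b + c ≥ 2 and gcd(a, b*m1 + c*m2) = 1, such that n1 = a*m1, n2 = a*m2, n3 = b*m1 + c*m2 is a minimal generating system of the numerical semigroup S generated by {n1,n2,n3}. Then the set of factorizations of a*(b*m1+c*m2), namely {(z1,z2,z3) ∈ ℕ^3 : z1*n1 + z2*n2 + z3*n3 = a*(b*m1+c*m2)}, equals {(0,0,a)} ∪ {(b + k*m2, c − k*m1, 0) : k ∈ ℤ, −⌊b/m2⌋ ≤ k ≤ ⌊c/m1⌋}. -/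
/-- The factorizations of the Betti element `a*(b*m1+c*m2)` of `⟨a*m1, a*m2, b*m1+c*m2⟩`
are `(0,0,a)` together with `(b + k*m2, c - k*m1, 0)` for `-⌊b/m2⌋ ≤ k ≤ ⌊c/m1⌋`. -/
theorem factorizations_of_betti_abc (a m1 m2 b c : ℕ) (ha : 2 ≤ a) (hm1 : 0 < m1) (hm : m1 < m2)
    (hcop : Nat.Coprime m1 m2) (hbc : 2 ≤ b + c)
    (hg : Nat.gcd a (b * m1 + c * m2) = 1)
    (hmin : MinimalGen3 (a * m1) (a * m2) (b * m1 + c * m2)) :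
    {z : ℕ × ℕ × ℕ | z.1 * (a * m1) + z.2.1 * (a * m2) + z.2.2 * (b * m1 + c * m2) =
        a * (b * m1 + c * m2)} =
      {((0, 0, a) : ℕ × ℕ × ℕ)} ∪
      {z : ℕ × ℕ × ℕ | ∃ k : ℤ, -((b / m2 : ℕ) : ℤ) ≤ k ∧ k ≤ ((c / m1 : ℕ) : ℤ) ∧
          (z.1 : ℤ) = (b : ℤ) + k * m2 ∧ (z.2.1 : ℤ) = (c : ℤ) - k * m1 ∧ z.2.2 = 0} := by
  have hm2 : 0 < m2 := by omega
  have hn3 : 0 < b * m1 + c * m2 := by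
    rcases Nat.eq_zero_or_pos b with h | h
    · have : 0 < c := by omega
      positivity
    · positivity
  ext ⟨x, y, z⟩
  simp only [Set.mem_setOf_eq, Set.mem_union, Set.mem_singleton_iff, Prod.mk.injEq]
  constructor
  · intro h
    have hd : a ∣ z * (b * m1 + c * m2) := by
      have h1 : a ∣ (x * (a * m1) + y * (a * m2)) := ⟨x * m1 + y * m2, by ring⟩
      exact (Nat.dvd_add_right h1).1 (h ▸ Dvd.intro _ rfl)
    obtain ⟨t, rfl⟩ := Nat.Coprime.dvd_of_dvd_mul_right hg hd
    have h2 : x * m1 + y * m2 + t * (b * m1 + c * m2) = b * m1 + c * m2 := by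
      apply Nat.eq_of_mul_eq_mul_left (show 0 < a by omega)
      rw [← h]; ring
    rcases Nat.eq_zero_or_pos t with rfl | ht
    · right
      have h3 : (x : ℤ) * m1 + y * m2 = b * m1 + c * m2 := by
        have : x * m1 + y * m2 = b * m1 + c * m2 := by simpa using h2
        exact_mod_cast this
      have hc : IsCoprime (m2 : ℤ) (m1 : ℤ) := (Nat.isCoprime_iff_coprime.2 hcop).symm
      have hdv : (m2 : ℤ) ∣ ((x : ℤ) - b) * m1 := ⟨(c : ℤ) - y, by linarith⟩
      obtain ⟨k, hk⟩ := hc.dvd_of_dvd_mul_right hdv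
      have hy : (c : ℤ) - y = k * m1 := by
        have : (m2 : ℤ) ≠ 0 := by positivity
        apply mul_left_cancel₀ this
        have : (m2 : ℤ) * k * m1 = ((x : ℤ) - b) * m1 := by rw [hk]
        linarith
      refine ⟨k, ?_, ?_, by linarith, by linarith, by simp⟩
      · rw [neg_le]
        push_cast
        rw [Int.le_ediv_iff_mul_le (by exact_mod_cast hm2)]
        have : (0 : ℤ) ≤ x := by positivity
        linarith
      · push_cast
        rw [Int.le_ediv_iff_mul_le (by exact_mod_cast hm1)]
        have : (0 : ℤ) ≤ y := by positivity
        linarith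
    · left
      have h4 : 1 * (b * m1 + c * m2) ≤ t * (b * m1 + c * m2) := Nat.mul_le_mul_right _ ht
      have hx : x * m1 = 0 := by omega
      have hy : y * m2 = 0 := by omega
      have ht1 : t * (b * m1 + c * m2) = 1 * (b * m1 + c * m2) := by omega
      have := Nat.eq_of_mul_eq_mul_right hn3 ht1
      subst this
      refine ⟨?_, ?_, by simp⟩
      · exact (Nat.mul_eq_zero.1 hx).resolve_right (by omega)
      · exact (Nat.mul_eq_zero.1 hy).resolve_right (by omega)
  · rintro (⟨rfl, rfl, rfl⟩ | ⟨k, -, -, hx, hy, rfl⟩)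
    · simp
    · zify
      rw [hx, hy]
      push_cast
      ring
end

section
/- Let δ1, δ2 be positive integers, g = gcd(δ1,δ2), and let λ1, λ2 be integers with 0 < λ1*δ1 + λ2*δ2 ≤ max{δ1,δ2}. Then there exist integers a1, a2, α with (a1,a2) ≠ (0,0), a1*a2 ≤ 0, −δ2/g < a1 ≤ δ2/g, −δ1/g < a2 ≤ δ1/g, λ1 = a1 + α*(δ2/g) and λ2 = a2 − α*(δ1/g); moreover, there are exactly two triples (a1,a2,α) of integers satisfying all these conditions. -/
theorem core_aux (p q l1 l2 : ℤ) (hq : 0 < q) (hp : 0 < p)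
    (hn : 0 < l1 * p + l2 * q) (hn2 : l1 * p + l2 * q ≤ p) :
    ∃ k : ℤ, ∀ a b α : ℤ, (¬ (a = 0 ∧ b = 0) ∧ a * b ≤ 0 ∧ -q < a ∧ a ≤ q ∧ -p < b ∧ b ≤ p ∧
      l1 = a + α * q ∧ l2 = b - α * p) ↔ (l1 = a + α * q ∧ l2 = b - α * p ∧ (α = k ∨ α = k + 1)) := by
  refine ⟨(l1 - 1) / q, fun a b α => ?_⟩
  have e1 := Int.emod_add_mul_ediv (l1 - 1) q
  have e2 := Int.emod_nonneg (l1 - 1) hq.ne'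
  have e3 := Int.emod_lt_of_pos (l1 - 1) hq
  generalize (l1 - 1) % q = r at *
  generalize (l1 - 1) / q = k at *
  constructor
  · rintro ⟨-, -, ha, ha', -, -, h1, h2⟩
    refine ⟨h1, h2, ?_⟩
    have u1 : q * (α - k) < q * 2 := by linarith
    have u2 : q * (-1) < q * (α - k) := by linarith
    have := lt_of_mul_lt_mul_left u1 hq.le
    have := lt_of_mul_lt_mul_left u2 hq.le
    omega
  · rintro ⟨h1, h2, h⟩
    have hab : a * p + b * q = l1 * p + l2 * q := by rw [h1, h2]; ring
    rw [← hab] at hn hn2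
    have hne : ¬ (a = 0 ∧ b = 0) := by
      rintro ⟨rfl, rfl⟩
      simp at hn
    rcases h with rfl | rfl
    · have ha1 : 1 ≤ a := by linarith
      have haq : a ≤ q := by linarith
      have hb : b ≤ 0 := by
        by_contra hb
        nlinarith
      refine ⟨hne, by nlinarith, by linarith, haq, ?_, by linarith, h1, h2⟩
      by_contra hb2
      nlinarith
    · have ha1 : a ≤ 0 := by linarith
      have haq : 1 - q ≤ a := by linarith
      have hb : 0 < b := by
        by_contra hb
        nlinarith
      refine ⟨hne, by nlinarith, by linarith, by linarith, by linarith, ?_, h1, h2⟩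
      by_contra hb2
      nlinarith

theorem core_sym (p q l1 l2 : ℤ) (hq : 0 < q) (hp : 0 < p)
    (hn : 0 < l1 * p + l2 * q) (hn2 : l1 * p + l2 * q ≤ p ∨ l1 * p + l2 * q ≤ q) :
    ∃ k : ℤ, ∀ a b α : ℤ, (¬ (a = 0 ∧ b = 0) ∧ a * b ≤ 0 ∧ -q < a ∧ a ≤ q ∧ -p < b ∧ b ≤ p ∧
      l1 = a + α * q ∧ l2 = b - α * p) ↔ (l1 = a + α * q ∧ l2 = b - α * p ∧ (α = k ∨ α = k + 1)) := by
  rcases hn2 with h | h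
  · exact core_aux p q l1 l2 hq hp hn h
  · obtain ⟨k, hk⟩ := core_aux q p l2 l1 hp hq (by linarith) (by linarith)
    refine ⟨-(k + 1), fun a b α => ?_⟩
    have := hk b a (-α)
    have e1 : l2 = b + -α * p ↔ l2 = b - α * p := by rw [neg_mul, sub_eq_add_neg]
    have e2 : l1 = a - -α * q ↔ l1 = a + α * q := by rw [neg_mul, sub_neg_eq_add]
    have e3 : (-α = k ∨ -α = k + 1) ↔ (α = -(k + 1) ∨ α = -(k + 1) + 1) := by omega
    rw [e1, e2, e3, mul_comm b a] at this
    constructor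
    · rintro ⟨x1, x2, x3, x4, x5, x6, x7, x8⟩
      obtain ⟨y1, y2, y3⟩ := this.1 ⟨fun h => x1 ⟨h.2, h.1⟩, x2, x5, x6, x3, x4, x8, x7⟩
      exact ⟨y2, y1, y3⟩
    · rintro ⟨y1, y2, y3⟩
      obtain ⟨x1, x2, x3, x4, x5, x6, x7, x8⟩ := this.2 ⟨y2, y1, y3⟩
      exact ⟨fun h => x1 ⟨h.2, h.1⟩, x2, x5, x6, x3, x4, x8, x7⟩

/-- Normalization: any coefficients `λ1, λ2` with `0 < λ1*δ1 + λ2*δ2 ≤ max(δ1,δ2)` can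
be written as `λ1 = a1 + α*(δ2/g)`, `λ2 = a2 - α*(δ1/g)` with `(a1,a2) ≠ (0,0)`,
`a1*a2 ≤ 0`, `-δ2/g < a1 ≤ δ2/g`, `-δ1/g < a2 ≤ δ1/g`; and there are exactly two such
triples `(a1, a2, α)`. -/
theorem normalization_two_triples (δ1 δ2 : ℕ) (h1 : 0 < δ1) (h2 : 0 < δ2) (l1 l2 : ℤ)
    (hpos : 0 < l1 * δ1 + l2 * δ2) (hle : l1 * δ1 + l2 * δ2 ≤ (max δ1 δ2 : ℤ)) :
    ∃ t1 t2 : ℤ × ℤ × ℤ, t1 ≠ t2 ∧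
      {t : ℤ × ℤ × ℤ | ¬ (t.1 = 0 ∧ t.2.1 = 0) ∧ t.1 * t.2.1 ≤ 0 ∧
        -((δ2 / Nat.gcd δ1 δ2 : ℕ) : ℤ) < t.1 ∧ t.1 ≤ ((δ2 / Nat.gcd δ1 δ2 : ℕ) : ℤ) ∧
        -((δ1 / Nat.gcd δ1 δ2 : ℕ) : ℤ) < t.2.1 ∧ t.2.1 ≤ ((δ1 / Nat.gcd δ1 δ2 : ℕ) : ℤ) ∧
        l1 = t.1 + t.2.2 * ((δ2 / Nat.gcd δ1 δ2 : ℕ) : ℤ) ∧ l2 = t.2.1 - t.2.2 * ((δ1 / Nat.gcd δ1 δ2 : ℕ) : ℤ)} = {t1, t2} := by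
  have hg : 0 < Nat.gcd δ1 δ2 := Nat.gcd_pos_of_pos_left _ h1
  have d1 : δ1 / Nat.gcd δ1 δ2 * Nat.gcd δ1 δ2 = δ1 := Nat.div_mul_cancel (Nat.gcd_dvd_left _ _)
  have d2 : δ2 / Nat.gcd δ1 δ2 * Nat.gcd δ1 δ2 = δ2 := Nat.div_mul_cancel (Nat.gcd_dvd_right _ _)
  generalize Nat.gcd δ1 δ2 = g at *
  generalize δ1 / g = p at *
  generalize δ2 / g = q at *
  subst d1 d2
  have hp : (0 : ℤ) < p := by exact_mod_cast Nat.pos_of_mul_pos_right h1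
  have hq : (0 : ℤ) < q := by exact_mod_cast Nat.pos_of_mul_pos_right h2
  have hg' : (0 : ℤ) < g := by exact_mod_cast hg
  push_cast at hpos hle
  have e : l1 * (p * g : ℤ) + l2 * (q * g) = (l1 * p + l2 * q) * g := by ring
  rw [e] at hpos hle
  have hn : 0 < l1 * (p : ℤ) + l2 * q := (pos_iff_pos_of_mul_pos hpos).2 hg'
  have hn2 : l1 * (p : ℤ) + l2 * q ≤ p ∨ l1 * (p : ℤ) + l2 * q ≤ q := by
    rcases le_max_iff.1 hle with h | h
    · exact Or.inl (le_of_mul_le_mul_right h hg')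
    · exact Or.inr (le_of_mul_le_mul_right h hg')
  obtain ⟨k, hk⟩ := core_sym p q l1 l2 hq hp hn hn2
  refine ⟨(l1 - k * q, l2 + k * p, k), (l1 - (k + 1) * q, l2 + (k + 1) * p, k + 1), ?_, ?_⟩
  · intro h
    have := congrArg (fun t => t.2.2) h
    simp at this
  · ext ⟨a, b, α⟩
    refine (hk a b α).trans ?_
    simp only [Set.mem_insert_iff, Set.mem_singleton_iff, Prod.mk.injEq]
    constructor
    · rintro ⟨x, y, rfl | rfl⟩
      · left; exact ⟨by linarith, by linarith, rfl⟩
      · right; exact ⟨by linarith, by linarith, rfl⟩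
    · rintro (⟨x, y, rfl⟩ | ⟨x, y, rfl⟩)
      · exact ⟨by linarith, by linarith, Or.inl rfl⟩
      · exact ⟨by linarith, by linarith, Or.inr rfl⟩
end

section
/- Let s1 > s2 > s3 ≥ 2 be pairwise coprime positive integers, let S be the numerical semigroup generated by n1 = s2*s3, n2 = s1*s3, n3 = s1*s2, and set δ1 = s1 − s2, δ2 = s2 − s3. Let s ∈ S and let z, z' ∈ Z(s) be factorizations of s with ℓ(z') < ℓ(z) and ℓ(z) − ℓ(z') ∉ Euc(δ1,δ2). Then there exists a factorization z'' ∈ Z(s) with ℓ(z') < ℓ(z'') < ℓ(z). -/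
theorem euc_symm (A B : ℕ) : Euc A B = Euc B A := by
  unfold Euc
  rw [max_comm, min_comm]

theorem euc_left {A B : ℕ} (hA : 0 < A) (hB : 0 < B) : A ∈ Euc A B := by
  rcases le_total B A with h | h
  · refine ⟨0, ?_, 0, ?_, ?_, ?_⟩ <;> simp [etaSeq, h, hB]
  · rcases Nat.eq_zero_or_pos (B % A) with h0 | h0
    · refine ⟨0, ?_, B / A - 1, ?_, ?_, ?_⟩ <;> simp [etaSeq, h, hA]
      have h1 : A * (B / A) = B := Nat.mul_div_cancel' (Nat.dvd_of_mod_eq_zero h0)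
      have h2 : 1 ≤ B / A := Nat.div_pos h hA
      obtain ⟨k, hk⟩ := Nat.exists_eq_add_of_le h2
      rw [hk] at h1 ⊢
      have h3 : B = k * A + A := by rw [← h1]; ring
      rw [Nat.add_sub_cancel_left]
      omega
    · refine ⟨1, ?_, 0, ?_, ?_, ?_⟩ <;> simp [etaSeq, h, h0]

theorem eta_congr {A A' B : ℕ} (h : A % B = A' % B) : ∀ n, etaSeq A B (n+1) = etaSeq A' B (n+1)
  | 0 => rfl
  | 1 => by simp [etaSeq, h]
  | n + 2 => by
    have h1 := eta_congr h n
    have h2 := eta_congr h (n+1)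
    show etaSeq A B (n+1) % etaSeq A B (n+1+1) = etaSeq A' B (n+1) % etaSeq A' B (n+1+1)
    rw [h1, h2]

theorem eta_shift_s18 (A B : ℕ) : ∀ n, etaSeq A B (n+1) = etaSeq B (A % B) n
  | 0 => rfl
  | 1 => rfl
  | n + 2 => by
    have h1 := eta_shift_s18 A B n
    have h2 := eta_shift_s18 A B (n+1)
    show etaSeq A B (n+1) % etaSeq A B (n+1+1) = etaSeq B (A % B) n % etaSeq B (A % B) (n+1)
    rw [h1, h2]

theorem euc_sub {A B : ℕ} (hB : 0 < B) (hBA : B < A) {x : ℕ} (hx : x ∈ Euc (A - B) B) :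
    x ∈ Euc A B := by
  obtain ⟨j, hj, q, hq1, hq2, hq3⟩ := hx
  have hm : A % B = (A - B) % B := Nat.mod_eq_sub_mod hBA.le
  rcases le_or_gt B (A - B) with h | h
  · rw [max_eq_left h, min_eq_right h] at *
    rcases j with _ | j
    · refine ⟨0, ?_, q + 1, ?_, ?_, ?_⟩ <;> try rw [max_eq_left hBA.le, min_eq_right hBA.le]
      · exact hB
      · simp
      · simp only [etaSeq] at hq2 ⊢
        rw [Nat.div_eq_sub_div hB hBA.le]; omega
      · simp only [etaSeq] at hq3 ⊢
        rw [hq3, Nat.add_mul, Nat.sub_sub]; congr 1; ring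
    · refine ⟨j + 1, ?_, q, hq1, ?_, ?_⟩ <;>
        rw [max_eq_left hBA.le, min_eq_right hBA.le, eta_congr hm] 
      · exact hj
      · rw [eta_congr hm]; exact hq2
      · rw [eta_congr hm]; exact hq3
  · rw [max_eq_right h.le, min_eq_left h.le] at *
    have hm' : A % B = A - B := by rw [hm, Nat.mod_eq_of_lt h]
    by_cases hc : j = 1 ∧ q = 0
    · obtain ⟨rfl, rfl⟩ := hc
      refine ⟨0, ?_, 1, ?_, ?_, ?_⟩ <;> try rw [max_eq_left hBA.le, min_eq_right hBA.le]
      · exact hB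
      · simp
      · exact Nat.div_pos hBA.le hB
      · simpa [etaSeq] using hq3
    · refine ⟨j + 1, ?_, q, ?_, ?_, ?_⟩
      · rw [max_eq_left hBA.le, min_eq_right hBA.le, eta_shift_s18, hm']; exact hj
      · split_ifs at hq1 ⊢ <;> omega
      · rw [max_eq_left hBA.le, min_eq_right hBA.le, eta_shift_s18, eta_shift_s18, hm']; exact hq2
      · rw [max_eq_left hBA.le, min_eq_right hBA.le, eta_shift_s18, eta_shift_s18, hm']; exact hq3

theorem euc_main : ∀ (n A B p q d : ℕ), A + B ≤ n → 0 < A → 0 < B → 0 < d →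
    d + B * q = A * p → (∀ a ≤ p, ∀ b ≤ q, B * b < A * a → d + B * b ≤ A * a) → d ∈ Euc A B := by
  intro n
  induction n with
  | zero => intros; omega
  | succ n ih =>
    intro A B p q d hn hA hB hd he hmin
    have hp : 1 ≤ p := by
      rcases Nat.eq_zero_or_pos p with rfl | h
      · simp at he; omega
      · exact h
    have hdA : d ≤ A := by
      have := hmin 1 hp 0 (Nat.zero_le _) (by simpa using hA)
      simpa using this
    rcases le_or_gt B A with hBA | hAB
    · rcases lt_or_ge q p with hqp | hqp
      · have : A ≤ d := by
          obtain ⟨k, rfl⟩ := Nat.exists_eq_add_of_le hqp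
          have := Nat.mul_le_mul_right q hBA
          nlinarith [Nat.zero_le (A * k)]
        have : d = A := le_antisymm hdA this
        rw [this]; exact euc_left hA hB
      · have hlt : B < A := by
          rcases lt_or_eq_of_le hBA with h | h
          · exact h
          · subst h
            have := Nat.mul_le_mul_left B hqp
            omega
        obtain ⟨C, rfl⟩ := Nat.exists_eq_add_of_le hBA
        obtain ⟨r, rfl⟩ := Nat.exists_eq_add_of_le hqp
        apply euc_sub hB hlt
        rw [Nat.add_sub_cancel_left]
        refine ih C B p r d (by omega) (by omega) hB hd (by nlinarith) ?_
        intro a ha b hb hab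
        have := hmin a ha (a + b) (by omega) (by nlinarith)
        nlinarith
    · have hqp : q < p := by
        by_contra h
        push Not at h
        have := Nat.mul_le_mul hAB.le h
        omega
      obtain ⟨C, rfl⟩ := Nat.exists_eq_add_of_le hAB.le
      obtain ⟨r, rfl⟩ := Nat.exists_eq_add_of_le hqp.le
      rw [euc_symm]
      apply euc_sub hA hAB
      rw [Nat.add_sub_cancel_left, euc_symm]
      refine ih A C r q d (by omega) hA (by omega) hd (by nlinarith) ?_
      intro a ha b hb hab
      have := hmin (b + a) (by omega) b hb (by nlinarith)
      nlinarith

theorem euc_exists {A B p q d : ℕ} (hA : 0 < A) (hB : 0 < B) (hd : 0 < d)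
    (he : d + B * q = A * p) (hne : d ∉ Euc A B) :
    ∃ a ≤ p, ∃ b ≤ q, B * b < A * a ∧ A * a < d + B * b := by
  by_contra h
  push Not at h
  exact hne (euc_main _ A B p q d le_rfl hA hB hd he h)

set_option maxHeartbeats 2000000 in
/-- If two factorizations of `s` have length difference not in the Euclid set, then
there is a factorization of `s` of intermediate length. -/
theorem intermediate_length_of_not_mem_euclid (s1 s2 s3 : ℕ) (h3 : 2 ≤ s3) (h32 : s3 < s2) (h21 : s2 < s1)
    (c12 : Nat.Coprime s1 s2) (c13 : Nat.Coprime s1 s3) (c23 : Nat.Coprime s2 s3)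
    (s : ℕ) (hs : memS (s2 * s3) (s1 * s3) (s1 * s2) s)
    (z z' : ℕ × ℕ × ℕ)
    (hz : z ∈ Zset (s2 * s3) (s1 * s3) (s1 * s2) s)
    (hz' : z' ∈ Zset (s2 * s3) (s1 * s3) (s1 * s2) s)
    (hlt : len z' < len z)
    (hne : len z - len z' ∉ Euc (s1 - s2) (s2 - s3)) :
    ∃ z'' ∈ Zset (s2 * s3) (s1 * s3) (s1 * s2) s,
      len z' < len z'' ∧ len z'' < len z := by
  obtain ⟨z1, z2, z3⟩ := z
  obtain ⟨w1, w2, w3⟩ := z'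
  simp only [Zset, len, Set.mem_setOf_eq] at *
  clear hs
  obtain ⟨d, hd⟩ := Nat.exists_eq_add_of_lt hlt
  have hd' : z1 + z2 + z3 - (w1 + w2 + w3) = d + 1 := by omega
  rw [hd'] at hne
  obtain ⟨B, hB⟩ := Nat.exists_eq_add_of_lt h32
  obtain ⟨A, hA⟩ := Nat.exists_eq_add_of_lt h21
  have eA : s1 - s2 = A + 1 := by omega
  have eB : s2 - s3 = B + 1 := by omega
  rw [eA, eB] at hne
  have E : ((z1:ℤ) - w1) * (s2 * s3) + (z2 - w2) * (s1 * s3) + (z3 - w3) * (s1 * s2) = 0 := by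
    have : ((z1 * (s2 * s3) + z2 * (s1 * s3) + z3 * (s1 * s2) : ℕ) : ℤ)
      = ((w1 * (s2 * s3) + w2 * (s1 * s3) + w3 * (s1 * s2) : ℕ) : ℤ) := by rw [hz, hz']
    push_cast at this
    linarith
  have k12 : IsCoprime (s1:ℤ) s2 := Nat.isCoprime_iff_coprime.2 c12
  have k13 : IsCoprime (s1:ℤ) s3 := Nat.isCoprime_iff_coprime.2 c13
  have k23 : IsCoprime (s2:ℤ) s3 := Nat.isCoprime_iff_coprime.2 c23
  obtain ⟨p, hp⟩ : (s1:ℤ) ∣ z1 - w1 := by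
    apply (k12.mul_right k13).dvd_of_dvd_mul_right
    exact ⟨-((z2 - w2) * s3 + (z3 - w3) * s2), by linarith⟩
  obtain ⟨m, hm⟩ : (s2:ℤ) ∣ z2 - w2 := by
    apply (k12.symm.mul_right k23).dvd_of_dvd_mul_right
    exact ⟨-((z1 - w1) * s3 + (z3 - w3) * s1), by linarith⟩
  obtain ⟨q, hq⟩ : (s3:ℤ) ∣ z3 - w3 := by
    apply (k13.symm.mul_right k23.symm).dvd_of_dvd_mul_right
    exact ⟨-((z1 - w1) * s2 + (z2 - w2) * s1), by linarith⟩
  have hsum : p + m + q = 0 := by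
    rw [hp, hm, hq] at E
    have h0 : ((s1:ℤ) * s2 * s3) ≠ 0 := by
      have : 0 < s1 * s2 * s3 := by
        have : 0 < s1 := by omega
        have : 0 < s2 := by omega
        positivity
      exact_mod_cast this.ne'
    apply (mul_eq_zero.1 (_ : ((s1:ℤ) * s2 * s3) * (p + m + q) = 0)).resolve_left h0
    linarith
  obtain rfl : m = -p - q := by linarith
  have hs2 : (s2:ℤ) = s3 + B + 1 := by rw [hB]; push_cast; ring
  have hs1 : (s1:ℤ) = s2 + A + 1 := by rw [hA]; push_cast; ring
  have hdZ : (z1:ℤ) + z2 + z3 = w1 + w2 + w3 + d + 1 := by exact_mod_cast hd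
  have hdel : (d:ℤ) + 1 = (A + 1) * p - (B + 1) * q := by
    have : (d:ℤ) + 1 = s1 * p + s2 * (-p - q) + s3 * q := by linarith
    rw [this, hs1, hs2]; ring
  have hzZ : (z1:ℤ) * (s2 * s3) + z2 * (s1 * s3) + z3 * (s1 * s2) = s := by exact_mod_cast hz
  have hwZ : (w1:ℤ) * (s2 * s3) + w2 * (s1 * s3) + w3 * (s1 * s2) = s := by exact_mod_cast hz'
  -- lifting an integer displacement from `w`
  have lift : ∀ a b : ℤ, 0 ≤ w1 + s1 * a → 0 ≤ w2 + s2 * (-a - b) → 0 ≤ w3 + s3 * b →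
      0 < (A + 1) * a - (B + 1) * b → (A + 1) * a - (B + 1) * b < (d:ℤ) + 1 →
      ∃ z'' : ℕ × ℕ × ℕ, z''.1 * (s2 * s3) + z''.2.1 * (s1 * s3) + z''.2.2 * (s1 * s2) = s ∧
        w1 + w2 + w3 < z''.1 + z''.2.1 + z''.2.2 ∧ z''.1 + z''.2.1 + z''.2.2 < z1 + z2 + z3 := by
    intro a b h1 h2 h3 h4 h5
    obtain ⟨x1, e1⟩ := Int.eq_ofNat_of_zero_le h1
    obtain ⟨x2, e2⟩ := Int.eq_ofNat_of_zero_le h2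
    obtain ⟨x3, e3⟩ := Int.eq_ofNat_of_zero_le h3
    have hl : (x1:ℤ) + x2 + x3 = w1 + w2 + w3 + ((A + 1) * a - (B + 1) * b) := by
      rw [← e1, ← e2, ← e3, hs1, hs2]; ring
    refine ⟨(x1, x2, x3), ?_, ?_, ?_⟩
    · have : (x1:ℤ) * (s2 * s3) + x2 * (s1 * s3) + x3 * (s1 * s2) = s := by
        rw [← e1, ← e2, ← e3, ← hwZ]; ring
      exact_mod_cast this
    · show w1 + w2 + w3 < x1 + x2 + x3
      zify; linarith
    · show x1 + x2 + x3 < z1 + z2 + z3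
      zify; linarith
  have g1 : (0:ℤ) ≤ s1 := by positivity
  have g2 : (0:ℤ) ≤ s2 := by positivity
  have g3 : (0:ℤ) ≤ s3 := by positivity
  have hA0 : (0:ℤ) ≤ A := by positivity
  have hB0 : (0:ℤ) ≤ B := by positivity
  have f1 : (0:ℤ) ≤ w1 := by positivity
  have f2 : (0:ℤ) ≤ w2 := by positivity
  have f3 : (0:ℤ) ≤ w3 := by positivity
  have f1' : (0:ℤ) ≤ z1 := by positivity
  have f2' : (0:ℤ) ≤ z2 := by positivity
  have f3' : (0:ℤ) ≤ z3 := by positivity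
  have nA : d + 1 ≠ A + 1 := by
    intro h; rw [h] at hne; exact hne (euc_left (by omega) (by omega))
  have nB : d + 1 ≠ B + 1 := by
    intro h; rw [h, euc_symm] at hne; exact hne (euc_left (by omega) (by omega))
  rcases le_or_gt q 0 with hq0 | hq0
  · rcases lt_trichotomy p 0 with hp0 | hp0 | hp0
    · -- both negative
      obtain ⟨P, hP⟩ := Int.eq_ofNat_of_zero_le (show 0 ≤ -p by omega)
      obtain ⟨Q, hQ⟩ := Int.eq_ofNat_of_zero_le (show 0 ≤ -q by omega)
      rw [euc_symm] at hne
      obtain ⟨b, hb, a, ha, i1, i2⟩ := euc_exists (A := B + 1) (B := A + 1) (p := Q) (q := P)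
        (by omega) (by omega) (Nat.succ_pos d) (by zify; rw [← hP, ← hQ]; linarith) hne
      zify at hb ha i1 i2
      apply lift (p + a) (q + b)
      · have := mul_nonneg g1 (Int.natCast_nonneg a); linarith
      · have := mul_nonneg g2 (show 0 ≤ -(p + a) - (q + b) by linarith); linarith
      · have := mul_nonneg g3 (Int.natCast_nonneg b); linarith
      · linarith
      · linarith
    · subst hp0
      have hq1 : q ≤ -1 := by
        by_contra h
        obtain rfl : q = 0 := by omega
        simp at hdel; omega
      have hle : (B:ℤ) + 1 ≤ d + 1 := by
        have := mul_nonneg (show (0:ℤ) ≤ B + 1 by linarith) (show 0 ≤ -q - 1 by linarith)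
        linarith
      apply lift 0 (-1)
      · simp
      · linarith
      · have := mul_nonneg g3 (show 0 ≤ -q - 1 by linarith)
        linarith
      · linarith
      · omega
    · have hle : (A:ℤ) + 1 ≤ d + 1 := by
        have := mul_nonneg (show (0:ℤ) ≤ A + 1 by linarith) (show 0 ≤ p - 1 by linarith)
        have := mul_nonneg (show (0:ℤ) ≤ B + 1 by linarith) (show 0 ≤ -q by linarith)
        linarith
      apply lift (p - 1) q
      · have := mul_nonneg g1 (show 0 ≤ p - 1 by linarith)
        linarith
      · linarith
      · linarith
      · have : (A:ℤ) + 1 < d + 1 := by omega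
        linarith
      · linarith
  · have hp0 : 0 < p := by
      by_contra h
      have := mul_nonneg (show (0:ℤ) ≤ A + 1 by linarith) (show 0 ≤ -p by linarith)
      have := mul_nonneg (show (0:ℤ) ≤ B + 1 by linarith) hq0.le
      have : (0:ℤ) ≤ d := by positivity
      linarith
    obtain ⟨P, rfl⟩ := Int.eq_ofNat_of_zero_le hp0.le
    obtain ⟨Q, rfl⟩ := Int.eq_ofNat_of_zero_le hq0.le
    obtain ⟨a, ha, b, hb, i1, i2⟩ := euc_exists (A := A + 1) (B := B + 1) (p := P) (q := Q)
        (by omega) (by omega) (Nat.succ_pos d) (by zify; linarith) hne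
    zify at hb ha i1 i2
    apply lift a b
    · positivity
    · have := mul_nonneg g2 (show (0:ℤ) ≤ P + Q - (a + b) by linarith); linarith
    · positivity
    · linarith
    · linarith
end
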